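/- arXiv:0904.0301 — 10 statements merged into one kernel-verified Lean document; each statement's English description precedes it below -/
import Mathlib

section
/- Let ψ : ℝ → E³ be a unit speed curve with Frenet apparatus (T, N, B, κ, τ), and suppose κ(s) ≠ 0 and τ(s) ≠ 0 for every s. Then the position vector ψ satisfies the fourth-order vector differential equation d/ds [ (1/τ(s)) · d/ds ( (1/κ(s)) · ψ''(s) ) ] + (κ(s)/τ(s) + τ(s)/κ(s)) · ψ''(s) + (d/ds (κ(s)/τ(s))) · ψ'(s) = 0 for all s ∈ ℝ. -/
noncomputable section
open Real
open scoped RealInnerProductSpace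

/-- Euclidean 3-space with the standard inner product. -/
abbrev E3 := EuclideanSpace ℝ (Fin 3)

/-- The point of `E3` with coordinates `(x, y, z)`. -/
def vec3 (x y z : ℝ) : E3 := !₂[x, y, z]

/-- The standard cross product on `E3`. -/
def cross3 (u v : E3) : E3 :=
  vec3 (u 1 * v 2 - u 2 * v 1) (u 2 * v 0 - u 0 * v 2) (u 0 * v 1 - u 1 * v 0)

/-- The third standard basis vector `e₃` of `E3`. -/
def e₃ : E3 := EuclideanSpace.single (2 : Fin 3) (1 : ℝ)

/-- The position vector of every unit speed space curve satisfies a fourth-order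
vector differential equation. -/
theorem position_vector_fourth_order_ode
    (ψ T N B : ℝ → E3) (κ τ : ℝ → ℝ)
    (hψ : ContDiff ℝ (⊤ : ℕ∞) ψ) (hTsm : ContDiff ℝ (⊤ : ℕ∞) T)
    (hNsm : ContDiff ℝ (⊤ : ℕ∞) N) (hBsm : ContDiff ℝ (⊤ : ℕ∞) B)
    (hκsm : ContDiff ℝ (⊤ : ℕ∞) κ) (hτsm : ContDiff ℝ (⊤ : ℕ∞) τ)
    (hT1 : ∀ s, ‖T s‖ = 1) (hN1 : ∀ s, ‖N s‖ = 1) (hB1 : ∀ s, ‖B s‖ = 1)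
    (hTN : ∀ s, ⟪T s, N s⟫ = 0) (hTB : ∀ s, ⟪T s, B s⟫ = 0) (hNB : ∀ s, ⟪N s, B s⟫ = 0)
    (hψT : ∀ s, deriv ψ s = T s)
    (hT' : ∀ s, deriv T s = κ s • N s)
    (hN' : ∀ s, deriv N s = (-(κ s)) • T s + τ s • B s)
    (hB' : ∀ s, deriv B s = (-(τ s)) • N s)
    (hκ0 : ∀ s, κ s ≠ 0) (hτ0 : ∀ s, τ s ≠ 0) :
    ∀ s : ℝ,
      deriv (fun u => (1 / τ u) • deriv (fun w => (1 / κ w) • deriv (deriv ψ) w) u) s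
        + (κ s / τ s + τ s / κ s) • deriv (deriv ψ) s
        + (deriv (fun u => κ u / τ u) s) • deriv ψ s = 0 := by
  have e1 : deriv ψ = T := funext hψT
  have e2 : deriv T = fun s => κ s • N s := funext hT'
  have e3 : (fun w => (1 / κ w) • (κ w • N w)) = N := by
    funext w
    rw [smul_smul, one_div, inv_mul_cancel₀ (hκ0 w), one_smul]
  have e4 : (fun u => (1 / τ u) • ((-(κ u)) • T u + τ u • B u))
      = fun u => (-(κ u / τ u)) • T u + B u := by
    funext u
    rw [smul_add, smul_smul, smul_smul, one_div, inv_mul_cancel₀ (hτ0 u), one_smul]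
    congr 2
    ring
  intro s
  simp only [e1, e2, e3, hN', e4]
  have dT : HasDerivAt T (κ s • N s) s := by
    rw [← hT' s]; exact (hTsm.differentiable (by simp) s).hasDerivAt
  have dB : HasDerivAt B ((-(τ s)) • N s) s := by
    rw [← hB' s]; exact (hBsm.differentiable (by simp) s).hasDerivAt
  have dq : HasDerivAt (fun u => κ u / τ u) (deriv (fun u => κ u / τ u) s) s :=
    ((hκsm.differentiable (by simp) s).div (hτsm.differentiable (by simp) s)
      (hτ0 s)).hasDerivAt
  have h := (dq.neg.smul dT).add dB
  have h2 : deriv (fun u => (-(κ u / τ u)) • T u + B u) s = _ := h.deriv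
  rw [h2]
  have hk := hκ0 s
  have ht := hτ0 s
  have e5 : (κ s / τ s + τ s / κ s) * κ s = κ s / τ s * κ s + τ s := by
    field_simp
  simp only [Pi.neg_apply, smul_smul, e5]
  module
end
end

section
/- Let ψ : ℝ → E³ be a unit speed curve with Frenet apparatus (T, N, B, κ, τ), with κ(s) > 0 and τ(s) ≠ 0 for every s, and set θ(s) = ∫₀ˢ κ(t) dt. Suppose g : ℝ → E³ and h : ℝ → ℝ are smooth with h nowhere zero, g(θ(s)) = T(s) and h(θ(s)) = κ(s)/τ(s) for all s. Then for every s, writing x = θ(s), one has (d/dx)(h(x)·g''(x)) + ((h(x)² + 1)/h(x)) · g'(x) + h'(x) · g(x) = 0. -/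
noncomputable section
open Real
open scoped RealInnerProductSpace

/-- In terms of the new parameter θ = ∫ κ ds, the tangent vector satisfies the
simplified third-order equation with f = κ/τ. -/
theorem tangent_ode_theta_parameter
    (ψ T N B : ℝ → E3) (κ τ : ℝ → ℝ)
    (hψ : ContDiff ℝ (⊤ : ℕ∞) ψ) (hTsm : ContDiff ℝ (⊤ : ℕ∞) T)
    (hNsm : ContDiff ℝ (⊤ : ℕ∞) N) (hBsm : ContDiff ℝ (⊤ : ℕ∞) B)
    (hκsm : ContDiff ℝ (⊤ : ℕ∞) κ) (hτsm : ContDiff ℝ (⊤ : ℕ∞) τ)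
    (hT1 : ∀ s, ‖T s‖ = 1) (hN1 : ∀ s, ‖N s‖ = 1) (hB1 : ∀ s, ‖B s‖ = 1)
    (hTN : ∀ s, ⟪T s, N s⟫ = 0) (hTB : ∀ s, ⟪T s, B s⟫ = 0) (hNB : ∀ s, ⟪N s, B s⟫ = 0)
    (hψT : ∀ s, deriv ψ s = T s)
    (hT' : ∀ s, deriv T s = κ s • N s)
    (hN' : ∀ s, deriv N s = (-(κ s)) • T s + τ s • B s)
    (hB' : ∀ s, deriv B s = (-(τ s)) • N s)
    (hκpos : ∀ s, 0 < κ s) (hτ0 : ∀ s, τ s ≠ 0)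
    (θ : ℝ → ℝ) (hθ : ∀ s, θ s = ∫ t in (0:ℝ)..s, κ t)
    (g : ℝ → E3) (h : ℝ → ℝ)
    (hg : ContDiff ℝ (⊤ : ℕ∞) g) (hh : ContDiff ℝ (⊤ : ℕ∞) h)
    (hh0 : ∀ x, h x ≠ 0)
    (hgT : ∀ s, g (θ s) = T s) (hhf : ∀ s, h (θ s) = κ s / τ s) :
    ∀ s : ℝ,
      deriv (fun x => h x • deriv (deriv g) x) (θ s)
        + (((h (θ s)) ^ 2 + 1) / h (θ s)) • deriv g (θ s)
        + (deriv h (θ s)) • g (θ s) = 0 := by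
  have hθd : ∀ s, HasDerivAt θ (κ s) s := by
    intro s
    have e : θ = fun s => ∫ t in (0:ℝ)..s, κ t := funext hθ
    rw [e]
    exact hκsm.continuous.integral_hasStrictDerivAt 0 s |>.hasDerivAt
  have key : ∀ (F : ℝ → E3) (G : ℝ → E3) (v : E3) (s : ℝ), DifferentiableAt ℝ F (θ s) →
      (∀ s, F (θ s) = G s) → HasDerivAt G (κ s • v) s → deriv F (θ s) = v := by
    intro F G v s hF hFG hG
    have h1 : HasDerivAt (F ∘ θ) (κ s • deriv F (θ s)) s :=
      HasDerivAt.scomp s hF.hasDerivAt (hθd s)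
    have h2 : F ∘ θ = G := funext hFG
    rw [h2] at h1
    exact smul_right_injective E3 (hκpos s).ne' (h1.unique hG)
  have hg1 : ContDiff ℝ (⊤ : ℕ∞) (deriv g) := (contDiff_infty_iff_deriv.1 hg).2
  have hg2 : ContDiff ℝ (⊤ : ℕ∞) (deriv (deriv g)) := (contDiff_infty_iff_deriv.1 hg1).2
  have dT : ∀ s, HasDerivAt T (κ s • N s) s := fun s => by
    rw [← hT' s]; exact (hTsm.differentiable (by simp) s).hasDerivAt
  have dN : ∀ s, HasDerivAt N ((-(κ s)) • T s + τ s • B s) s := fun s => by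
    rw [← hN' s]; exact (hNsm.differentiable (by simp) s).hasDerivAt
  have dB : ∀ s, HasDerivAt B ((-(τ s)) • N s) s := fun s => by
    rw [← hB' s]; exact (hBsm.differentiable (by simp) s).hasDerivAt
  have e1 : ∀ s, deriv g (θ s) = N s := fun s =>
    key g T _ s (hg.differentiable (by simp) _) hgT (dT s)
  have e2 : ∀ s, deriv (deriv g) (θ s) = - T s + (τ s / κ s) • B s := fun s => by
    have hk := (hκpos s).ne'
    refine key (deriv g) N _ s (hg1.differentiable (by simp) _) e1 ?_
    convert dN s using 1
    rw [smul_add, smul_smul, mul_div_cancel₀ _ hk, smul_neg, neg_smul]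
  have e3 : ∀ s, h (θ s) • deriv (deriv g) (θ s) = - (h (θ s) • T s) + B s := fun s => by
    have hk := (hκpos s).ne'
    have ht := hτ0 s
    have : κ s / τ s * (τ s / κ s) = 1 := by field_simp
    rw [e2, smul_add, smul_smul, smul_neg, hhf s, this, one_smul]
  intro s
  have hk := (hκpos s).ne'
  have ht := hτ0 s
  have hd := hh.differentiable (by simp) (θ s)
  have dh : HasDerivAt (fun s => h (θ s)) (deriv h (θ s) * κ s) s :=
    hd.hasDerivAt.comp s (hθd s)
  have e4 : deriv (fun x => h x • deriv (deriv g) x) (θ s)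
      = - (deriv h (θ s) • T s) - (((h (θ s)) ^ 2 + 1) / h (θ s)) • N s := by
    refine key _ _ _ s (hd.smul (hg2.differentiable (by simp) _)) e3 ?_
    have this : κ s * (((h (θ s)) ^ 2 + 1) / h (θ s)) = h (θ s) * κ s + τ s := by
      rw [hhf s]; field_simp
    have e5 : κ s • (- (deriv h (θ s) • T s) - (((h (θ s)) ^ 2 + 1) / h (θ s)) • N s)
        = -(h (θ s) • κ s • N s + (deriv h (θ s) * κ s) • T s) + (-(τ s)) • N s := by
      rw [smul_sub, smul_smul, this]
      module
    rw [e5]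
    exact (dh.smul (dT s)).neg.add (dB s)
  rw [e4, e1, hgT]
  module
end
end

section
/- Let ψ : ℝ → E³ be a unit speed curve with Frenet apparatus (T, N, B, κ, τ), with κ(s) > 0 for every s, and let α ∈ (0, π) be such that τ(s) = cot(α)·κ(s) for all s (so ψ is a general helix). Set φ(s) = (1/ sin α) ∫₀ˢ κ(t) dt, and suppose g : ℝ → E³ is smooth with g(φ(s)) = T(s) for all s. Then for every s, writing x = φ(s), one has g'''(x) + g'(x) = 0. -/
noncomputable section
open Real
open scoped RealInnerProductSpace

/-- For a general helix with τ = cot α · κ, the tangent vector viewed as a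
function of φ = csc α ∫ κ ds satisfies g''' + g' = 0. -/
theorem helix_tangent_ode_phi_parameter
    (ψ T N B : ℝ → E3) (κ τ : ℝ → ℝ)
    (hψ : ContDiff ℝ (⊤ : ℕ∞) ψ) (hTsm : ContDiff ℝ (⊤ : ℕ∞) T)
    (hNsm : ContDiff ℝ (⊤ : ℕ∞) N) (hBsm : ContDiff ℝ (⊤ : ℕ∞) B)
    (hκsm : ContDiff ℝ (⊤ : ℕ∞) κ) (hτsm : ContDiff ℝ (⊤ : ℕ∞) τ)
    (hT1 : ∀ s, ‖T s‖ = 1) (hN1 : ∀ s, ‖N s‖ = 1) (hB1 : ∀ s, ‖B s‖ = 1)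
    (hTN : ∀ s, ⟪T s, N s⟫ = 0) (hTB : ∀ s, ⟪T s, B s⟫ = 0) (hNB : ∀ s, ⟪N s, B s⟫ = 0)
    (hψT : ∀ s, deriv ψ s = T s)
    (hT' : ∀ s, deriv T s = κ s • N s)
    (hN' : ∀ s, deriv N s = (-(κ s)) • T s + τ s • B s)
    (hB' : ∀ s, deriv B s = (-(τ s)) • N s)
    (hκpos : ∀ s, 0 < κ s)
    (α : ℝ) (hα : α ∈ Set.Ioo (0 : ℝ) π)
    (hhelix : ∀ s, τ s = Real.cot α * κ s)
    (φ : ℝ → ℝ) (hφ : ∀ s, φ s = (1 / Real.sin α) * ∫ t in (0:ℝ)..s, κ t)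
    (g : ℝ → E3) (hg : ContDiff ℝ (⊤ : ℕ∞) g)
    (hgT : ∀ s, g (φ s) = T s) :
    ∀ s : ℝ, deriv (deriv (deriv g)) (φ s) + deriv g (φ s) = 0 := by
  have hs : Real.sin α ≠ 0 := (Real.sin_pos_of_pos_of_lt_pi hα.1 hα.2).ne'
  have hφd : ∀ s, HasDerivAt φ (1 / Real.sin α * κ s) s := by
    intro s
    have h := (hκsm.continuous.integral_hasStrictDerivAt 0 s).hasDerivAt.const_mul (1 / Real.sin α)
    have e : φ = fun s => 1 / Real.sin α * ∫ t in (0:ℝ)..s, κ t := funext hφ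
    rw [e]
    exact h
  have key : ∀ (h F G : ℝ → E3), Differentiable ℝ h → (∀ s, h (φ s) = F s) →
      (∀ s, HasDerivAt F (κ s • G s) s) → ∀ s, deriv h (φ s) = Real.sin α • G s := by
    intro h F G hh hF hG s
    have h1 : HasDerivAt (fun s => h (φ s)) ((1 / Real.sin α * κ s) • deriv h (φ s)) s :=
      (hh (φ s)).hasDerivAt.scomp s (hφd s)
    have e : (fun s => h (φ s)) = F := funext hF
    rw [e] at h1
    have h2 := h1.unique (hG s)
    have hk := (hκpos s).ne'
    have h3 : deriv h (φ s) = (Real.sin α / κ s) • ((1 / Real.sin α * κ s) • deriv h (φ s)) := by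
      rw [smul_smul]
      have : Real.sin α / κ s * (1 / Real.sin α * κ s) = 1 := by field_simp
      rw [this, one_smul]
    rw [h3, h2, smul_smul]
    congr 1
    field_simp
  have g1 : ContDiff ℝ (⊤ : ℕ∞) (deriv g) := (contDiff_infty_iff_deriv.1 hg).2
  have g2 : ContDiff ℝ (⊤ : ℕ∞) (deriv (deriv g)) := (contDiff_infty_iff_deriv.1 g1).2
  have dT : ∀ s, HasDerivAt T (κ s • N s) s := fun s => by
    rw [← hT']; exact (hTsm.differentiable (by simp) s).hasDerivAt
  have dN : ∀ s, HasDerivAt N (κ s • (-T s + Real.cot α • B s)) s := fun s => by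
    have h := (hNsm.differentiable (by simp) s).hasDerivAt
    rw [hN', hhelix] at h
    refine h.congr_deriv ?_
    module
  have dB : ∀ s, HasDerivAt B (κ s • (-Real.cot α • N s)) s := fun s => by
    have h := (hBsm.differentiable (by simp) s).hasDerivAt
    rw [hB', hhelix] at h
    refine h.congr_deriv ?_
    module
  have k1 := key g T N (hg.differentiable (by simp)) hgT dT
  have k2 := key (deriv g) (fun s => Real.sin α • N s)
    (fun s => Real.sin α • (-T s + Real.cot α • B s)) (g1.differentiable (by simp)) k1
    (fun s => by
      refine ((dN s).const_smul (Real.sin α)).congr_deriv ?_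
      module)
  have k3 := key (deriv (deriv g)) _
    (fun s => Real.sin α • Real.sin α • (-N s + Real.cot α • (-Real.cot α • N s)))
    (g2.differentiable (by simp)) k2
    (fun s => by
      refine ((((dT s).neg.add ((dB s).const_smul (Real.cot α))).const_smul
        (Real.sin α)).const_smul (Real.sin α)).congr_deriv ?_
      module)
  intro s
  rw [k3, k1]
  have hc : Real.sin α * Real.sin α * Real.sin α * (-1 - Real.cot α * Real.cot α)
      + Real.sin α = 0 := by
    rw [Real.cot_eq_cos_div_sin]
    field_simp
    linear_combination (-Real.sin α) * Real.sin_sq_add_cos_sq α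
  have e : Real.sin α • Real.sin α • Real.sin α • (-N s + Real.cot α • (-Real.cot α • N s))
      + Real.sin α • N s = (Real.sin α * Real.sin α * Real.sin α *
        (-1 - Real.cot α * Real.cot α) + Real.sin α) • N s := by module
  rw [e, hc, zero_smul]
end
end

section
/- Let α ∈ (0, π) and let g : ℝ → E³ be a smooth map such that for all x ∈ ℝ: g'''(x) + g'(x) = 0, ‖g(x)‖ = 1, ⟨g(x), e₃⟩ = cos α, and g'(x) ≠ 0. Then there exist ε ∈ ℝ and δ ∈ {−1, 1} such that g(x) = ( sin α · cos(δx + ε), sin α · sin(δx + ε), cos α ) for all x ∈ ℝ. -/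
noncomputable section
open Real
open scoped RealInnerProductSpace

theorem helix_aux_ode (g : ℝ → E3) (hg : ContDiff ℝ (⊤ : ℕ∞) g)
    (hode : ∀ x : ℝ, deriv (deriv (deriv g)) x + deriv g x = 0) (x : ℝ) :
    g x = (g 0 + deriv (deriv g) 0) + Real.sin x • deriv g 0
      - Real.cos x • deriv (deriv g) 0 := by
  have hg1 : ContDiff ℝ (⊤ : ℕ∞) (deriv g) := by
    have := (contDiff_infty_iff_deriv (𝕜 := ℝ)).1 hg
    exact this.2
  have hg2 : ContDiff ℝ (⊤ : ℕ∞) (deriv (deriv g)) := by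
    have := (contDiff_infty_iff_deriv (𝕜 := ℝ)).1 hg1
    exact this.2
  have d0 : ∀ y, HasDerivAt g (deriv g y) y := fun y =>
    ((hg.differentiable (by simp)) y).hasDerivAt
  have d1 : ∀ y, HasDerivAt (deriv g) (deriv (deriv g) y) y := fun y =>
    ((hg1.differentiable (by simp)) y).hasDerivAt
  have d2 : ∀ y, HasDerivAt (deriv (deriv g)) (-deriv g y) y := fun y => by
    rw [← eq_neg_of_add_eq_zero_left (hode y)]
    exact ((hg2.differentiable (by simp)) y).hasDerivAt
  have key : ∀ F : ℝ → E3, (∀ y, HasDerivAt F 0 y) → F x = F 0 := fun F hF =>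
    is_const_of_deriv_eq_zero (fun y => (hF y).differentiableAt) (fun y => (hF y).deriv) x 0
  have hA := key (fun y => g y + deriv (deriv g) y) (fun y => by
    simpa using (d0 y).fun_add (d2 y))
  have hB := key (fun y => Real.cos y • deriv g y - Real.sin y • deriv (deriv g) y) (fun y => by
    refine HasDerivAt.congr_deriv (((Real.hasDerivAt_cos y).fun_smul (d1 y)).fun_sub
      ((Real.hasDerivAt_sin y).fun_smul (d2 y))) ?_
    module)
  have hC := key (fun y => Real.sin y • deriv g y + Real.cos y • deriv (deriv g) y) (fun y => by
    refine HasDerivAt.congr_deriv (((Real.hasDerivAt_sin y).fun_smul (d1 y)).fun_add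
      ((Real.hasDerivAt_cos y).fun_smul (d2 y))) ?_
    module)
  simp only [Real.cos_zero, Real.sin_zero, one_smul, zero_smul, sub_zero, zero_add] at hA hB hC
  rw [← hA, ← hB, ← hC]
  have h := Real.sin_sq_add_cos_sq x
  have h2 : deriv (deriv g) x = (Real.sin x ^ 2 + Real.cos x ^ 2) • deriv (deriv g) x := by
    rw [h, one_smul]
  nth_rewrite 1 [h2]
  module

theorem helix_aux_alg (a0 a1 b0 b1 c0 c1 s r : ℝ) (hr : r ^ 2 = 1 / 2)
    (hb : b0 ^ 2 + b1 ^ 2 ≠ 0)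
    (n1 : (a0 + 0 * b0 - 1 * c0) ^ 2 + (a1 + 0 * b1 - 1 * c1) ^ 2 = s ^ 2)
    (n2 : (a0 + 0 * b0 - -1 * c0) ^ 2 + (a1 + 0 * b1 - -1 * c1) ^ 2 = s ^ 2)
    (n3 : (a0 + 1 * b0 - 0 * c0) ^ 2 + (a1 + 1 * b1 - 0 * c1) ^ 2 = s ^ 2)
    (n4 : (a0 + -1 * b0 - 0 * c0) ^ 2 + (a1 + -1 * b1 - 0 * c1) ^ 2 = s ^ 2)
    (n5 : (a0 + r * b0 - r * c0) ^ 2 + (a1 + r * b1 - r * c1) ^ 2 = s ^ 2) :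
    a0 = 0 ∧ a1 = 0 ∧ c0 ^ 2 + c1 ^ 2 = s ^ 2 ∧
      ∃ δ : ℝ, (δ = -1 ∨ δ = 1) ∧ b0 = δ * c1 ∧ b1 = -(δ * c0) := by
  have hac : a0 * c0 + a1 * c1 = 0 := by linear_combination (n2 - n1) / 4
  have hab : a0 * b0 + a1 * b1 = 0 := by linear_combination (n3 - n4) / 4
  have hbc2 : b0 ^ 2 + b1 ^ 2 = c0 ^ 2 + c1 ^ 2 := by
    linear_combination (n3 + n4 - n1 - n2) / 2
  have hbc : b0 * c0 + b1 * c1 = 0 := by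
    linear_combination -n5 + n1 + 2 * r * hab + (2 - 2 * r) * hac + hbc2 / 2 +
      ((b0 - c0) ^ 2 + (b1 - c1) ^ 2) * hr
  have hD : (b0 * c1 - b1 * c0) ^ 2 = (b0 ^ 2 + b1 ^ 2) ^ 2 := by
    linear_combination -(b0 * c0 + b1 * c1) * hbc - (b0 ^ 2 + b1 ^ 2) * hbc2
  have hD0 : b0 * c1 - b1 * c0 ≠ 0 := by
    intro h
    rw [h] at hD
    exact hb (pow_eq_zero_iff (two_ne_zero)|>.1 (by linarith))
  have ha0 : a0 = 0 := by
    apply (mul_eq_zero.1 (_ : a0 * (b0 * c1 - b1 * c0) = 0)).resolve_right hD0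
    linear_combination c1 * hab - b1 * hac
  have ha1 : a1 = 0 := by
    apply (mul_eq_zero.1 (_ : a1 * (b0 * c1 - b1 * c0) = 0)).resolve_right hD0
    linear_combination b0 * hac - c0 * hab
  refine ⟨ha0, ha1, ?_, ?_⟩
  · rw [ha0, ha1] at n1; linear_combination n1
  · rcases sq_eq_sq_iff_eq_or_eq_neg.1 hD with h | h
    · refine ⟨1, Or.inr rfl, ?_, ?_⟩
      · apply mul_right_cancel₀ hb
        linear_combination b0 * hbc2 + c1 * h + c0 * hbc
      · apply mul_right_cancel₀ hb
        linear_combination b1 * hbc2 - c0 * h + c1 * hbc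
    · refine ⟨-1, Or.inl rfl, ?_, ?_⟩
      · apply mul_right_cancel₀ hb
        linear_combination b0 * hbc2 + c1 * h + c0 * hbc
      · apply mul_right_cancel₀ hb
        linear_combination b1 * hbc2 - c0 * h + c1 * hbc

/-- A unit solution of g''' + g' = 0 making a constant angle α with e₃ and with
nonvanishing derivative is a circle parameterization of the helix tangent. -/
theorem helix_tangent_explicit
    (α : ℝ) (hα : α ∈ Set.Ioo (0 : ℝ) π)
    (g : ℝ → E3) (hg : ContDiff ℝ (⊤ : ℕ∞) g)
    (hode : ∀ x : ℝ, deriv (deriv (deriv g)) x + deriv g x = 0)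
    (hunit : ∀ x : ℝ, ‖g x‖ = 1)
    (hangle : ∀ x : ℝ, ⟪g x, e₃⟫ = Real.cos α)
    (hreg : ∀ x : ℝ, deriv g x ≠ 0) :
    ∃ ε δ : ℝ, (δ = -1 ∨ δ = 1) ∧ ∀ x : ℝ,
      g x = vec3 (Real.sin α * Real.cos (δ * x + ε))
                 (Real.sin α * Real.sin (δ * x + ε))
                 (Real.cos α) := by
  have hs : 0 < Real.sin α := Real.sin_pos_of_pos_of_lt_pi hα.1 hα.2
  have hsol := helix_aux_ode g hg hode
  have hB := hreg 0
  generalize g 0 + deriv (deriv g) 0 = A at hsol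
  generalize deriv (deriv g) 0 = C at hsol
  generalize deriv g 0 = B at hsol hB
  have hco : ∀ x i, g x i = A i + Real.sin x * B i - Real.cos x * C i := fun x i => by
    rw [hsol x]; simp
  have h3 : ∀ x, g x 2 = Real.cos α := fun x => by
    rw [← hangle x]; simp [e₃, EuclideanSpace.inner_single_right]
  have hn : ∀ x, g x 0 ^ 2 + g x 1 ^ 2 = Real.sin α ^ 2 := fun x => by
    have h := EuclideanSpace.norm_sq_eq (g x)
    rw [hunit x, Fin.sum_univ_three, h3 x] at h
    simp only [Real.norm_eq_abs, sq_abs] at h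
    nlinarith [Real.sin_sq_add_cos_sq α]
  have hB2 : B 2 = 0 := by
    have h1 := h3 (π/2)
    have h2 := h3 (-(π/2))
    rw [hco] at h1 h2
    simp at h1 h2
    linarith
  have n1 := hn 0
  have n2 := hn π
  have n3 := hn (π/2)
  have n4 := hn (-(π/2))
  have n5 := hn (π/4)
  simp only [hco, Real.sin_zero, Real.cos_zero, Real.sin_pi, Real.cos_pi, Real.sin_neg,
    Real.cos_neg, Real.sin_pi_div_two, Real.cos_pi_div_two, Real.sin_pi_div_four,
    Real.cos_pi_div_four] at n1 n2 n3 n4 n5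
  have hr : (√2 / 2) ^ 2 = (1/2 : ℝ) := by
    rw [div_pow, Real.sq_sqrt (by norm_num)]; norm_num
  generalize √2 / 2 = r at n5 hr
  have hB' : B 0 ^ 2 + B 1 ^ 2 ≠ 0 := by
    intro h
    apply hB
    ext i
    fin_cases i
    · simp; nlinarith [sq_nonneg (B 0), sq_nonneg (B 1)]
    · simp; nlinarith [sq_nonneg (B 0), sq_nonneg (B 1)]
    · simpa using hB2
  obtain ⟨ha0, ha1, hN, δ, hδ, hb0, hb1⟩ := helix_aux_alg (A 0) (A 1) (B 0) (B 1) (C 0) (C 1)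
    (Real.sin α) r hr hB' (by linarith) (by linarith) (by linarith) (by linarith) (by linarith)
  obtain ⟨ε, he0, he1⟩ : ∃ ε, -C 0 = Real.sin α * Real.cos ε ∧ -C 1 = Real.sin α * Real.sin ε := by
    have hz : ‖(⟨-C 0, -C 1⟩ : ℂ)‖ = Real.sin α := by
      rw [← sq_eq_sq₀ (norm_nonneg _) hs.le, Complex.sq_norm, Complex.normSq_mk, ← hN]; ring
    refine ⟨Complex.arg ⟨-C 0, -C 1⟩, ?_, ?_⟩
    · have h := Complex.norm_mul_cos_arg (⟨-C 0, -C 1⟩ : ℂ)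
      rw [hz] at h; exact h.symm
    · have h := Complex.norm_mul_sin_arg (⟨-C 0, -C 1⟩ : ℂ)
      rw [hz] at h; exact h.symm
  refine ⟨ε, δ, hδ, fun x => ?_⟩
  have hc : Real.cos (δ * x) = Real.cos x := by rcases hδ with rfl | rfl <;> simp
  have hsn : Real.sin (δ * x) = δ * Real.sin x := by rcases hδ with rfl | rfl <;> simp
  ext i
  fin_cases i
  · simp only [vec3, Real.cos_add, hc, hsn]
    simp only [Fin.zero_eta, hco, ha0, hb0]
    simp
    linear_combination Real.cos x * he0 - δ * Real.sin x * he1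
  · simp only [vec3, Real.sin_add, hc, hsn]
    simp only [Fin.mk_one, hco, ha1, hb1]
    simp
    linear_combination Real.cos x * he1 + δ * Real.sin x * he0
  · simpa [vec3] using h3 x
end
end

section
/- Let ψ : ℝ → E³ be a unit speed curve with Frenet apparatus (T, N, B, κ, τ) with κ(s) > 0 for all s, and let α ∈ (0, π) be such that τ(s) = cot(α)·κ(s) for all s and such that ⟨T(s), e₃⟩ = cos α for all s (the axis of the general helix is e₃). Set φ(s) = (1/ sin α) ∫₀ˢ κ(t) dt. Then there exist ε ∈ ℝ and δ ∈ {−1, 1} such that the position vector of ψ is given in the natural parameter by ψ(s) = ψ(0) + ∫₀ˢ ( sin α · cos(δφ(t) + ε), sin α · sin(δφ(t) + ε), cos α ) dt for all s ∈ ℝ. -/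
noncomputable section
open Real
open scoped RealInnerProductSpace

/-- The position vector of a general helix with axis e₃ in the natural parameter. -/
theorem helix_position_vector_natural
    (ψ T N B : ℝ → E3) (κ τ : ℝ → ℝ)
    (hψ : ContDiff ℝ (⊤ : ℕ∞) ψ) (hTsm : ContDiff ℝ (⊤ : ℕ∞) T)
    (hNsm : ContDiff ℝ (⊤ : ℕ∞) N) (hBsm : ContDiff ℝ (⊤ : ℕ∞) B)
    (hκsm : ContDiff ℝ (⊤ : ℕ∞) κ) (hτsm : ContDiff ℝ (⊤ : ℕ∞) τ)
    (hT1 : ∀ s, ‖T s‖ = 1) (hN1 : ∀ s, ‖N s‖ = 1) (hB1 : ∀ s, ‖B s‖ = 1)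
    (hTN : ∀ s, ⟪T s, N s⟫ = 0) (hTB : ∀ s, ⟪T s, B s⟫ = 0) (hNB : ∀ s, ⟪N s, B s⟫ = 0)
    (hψT : ∀ s, deriv ψ s = T s)
    (hT' : ∀ s, deriv T s = κ s • N s)
    (hN' : ∀ s, deriv N s = (-(κ s)) • T s + τ s • B s)
    (hB' : ∀ s, deriv B s = (-(τ s)) • N s)
    (hκpos : ∀ s, 0 < κ s)
    (α : ℝ) (hα : α ∈ Set.Ioo (0 : ℝ) π)
    (hhelix : ∀ s, τ s = Real.cot α * κ s)
    (haxis : ∀ s, ⟪T s, e₃⟫ = Real.cos α)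
    (φ : ℝ → ℝ) (hφ : ∀ s, φ s = (1 / Real.sin α) * ∫ t in (0:ℝ)..s, κ t) :
    ∃ ε δ : ℝ, (δ = -1 ∨ δ = 1) ∧ ∀ s : ℝ,
      ψ s = ψ 0 + ∫ t in (0:ℝ)..s,
        vec3 (Real.sin α * Real.cos (δ * φ t + ε))
             (Real.sin α * Real.sin (δ * φ t + ε))
             (Real.cos α) := by
  have hsin : 0 < Real.sin α := Real.sin_pos_of_mem_Ioo hα
  have hcd : ∀ (F : ℝ → E3), ContDiff ℝ (⊤ : ℕ∞) F → ∀ s, HasDerivAt F (deriv F s) s :=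
    fun F hF s => (hF.differentiable (by simp)).differentiableAt.hasDerivAt
  have hco : ∀ (F : ℝ → E3), ContDiff ℝ (⊤ : ℕ∞) F → ∀ (i : Fin 3) s,
      HasDerivAt (fun t => F t i) (deriv F s i) s := by
    intro F hF i s
    exact (hasDerivAt_pi.1 ((PiLp.hasStrictFDerivAt_ofLp 2 (𝕜 := ℝ)
      (F s)).hasFDerivAt.comp_hasDerivAt s (hcd F hF s))) i
  have hTd : ∀ i s, HasDerivAt (fun t => T t i) (κ s * N s i) s := by
    intro i s
    have := hco T hTsm i s
    rw [hT'] at this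
    simpa using this
  have hNd := hco N hNsm
  have hT2 : ∀ s, T s 2 = Real.cos α := by
    intro s
    have := haxis s
    simpa [e₃, PiLp.inner_apply, Fin.sum_univ_three] using this
  have hN2 : ∀ s, N s 2 = 0 := by
    intro s
    have h1 := hTd 2 s
    have h2 : HasDerivAt (fun t => T t 2) 0 s := by
      simp only [hT2]
      exact hasDerivAt_const s _
    have := h1.unique h2
    rcases mul_eq_zero.1 this with h | h
    · exact absurd h (hκpos s).ne'
    · exact h
  have hTn : ∀ s, T s 0 ^ 2 + T s 1 ^ 2 = Real.sin α ^ 2 := by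
    intro s
    have h := EuclideanSpace.real_norm_sq_eq (T s)
    rw [hT1, Fin.sum_univ_three, hT2] at h
    nlinarith [Real.sin_sq_add_cos_sq α]
  have hNn : ∀ s, N s 0 ^ 2 + N s 1 ^ 2 = 1 := by
    intro s
    have h := EuclideanSpace.real_norm_sq_eq (N s)
    rw [hN1, Fin.sum_univ_three, hN2] at h
    nlinarith
  have hperp : ∀ s, T s 0 * N s 0 + T s 1 * N s 1 = 0 := by
    intro s
    have h := hTN s
    simp only [PiLp.inner_apply, Fin.sum_univ_three, hN2] at h
    simp at h
    linarith
  obtain ⟨D, hD⟩ : ∃ D : ℝ → ℝ, D = fun s => T s 0 * N s 1 - T s 1 * N s 0 := ⟨_, rfl⟩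
  have hDs : ∀ s, D s = T s 0 * N s 1 - T s 1 * N s 0 := fun s => by rw [hD]
  have hDsq : ∀ s, D s ^ 2 = Real.sin α ^ 2 := by
    intro s
    rw [hDs, ← hTn s]
    linear_combination (T s 0 ^ 2 + T s 1 ^ 2) * hNn s
      - (T s 0 * N s 0 + T s 1 * N s 1) * hperp s
  have hDdiff : Differentiable ℝ D := by
    intro s
    rw [hD]
    exact (((hTd 0 s).mul (hNd 1 s)).sub ((hTd 1 s).mul (hNd 0 s))).differentiableAt
  have hDc : ∀ s, D s = D 0 := by
    intro s
    refine is_const_of_deriv_eq_zero hDdiff ?_ s 0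
    intro x
    have h1 := (hDdiff x).hasDerivAt.pow 2
    have h2 : HasDerivAt (D ^ 2) 0 x := by
      have : D ^ 2 = fun _ => Real.sin α ^ 2 := funext hDsq
      rw [this]
      exact hasDerivAt_const x _
    have h3 := h1.unique h2
    have hx : D x ≠ 0 := by
      intro h
      have := hDsq x
      rw [h] at this
      nlinarith [pow_pos hsin 2]
    simpa [hx] using h3
  obtain ⟨δ, hδ⟩ : ∃ δ : ℝ, D 0 = δ * Real.sin α := ⟨D 0 / Real.sin α, by field_simp⟩
  have hδ1 : δ ^ 2 = 1 := by
    have := hDsq 0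
    rw [hδ, mul_pow] at this
    exact mul_right_cancel₀ (pow_pos hsin 2).ne' (by rw [this, one_mul])
  have hN0 : ∀ s, N s 0 = -(δ / Real.sin α) * T s 1 := by
    intro s
    have h := hDs s
    rw [hDc, hδ] at h
    have : Real.sin α ^ 2 * N s 0 = - (δ * Real.sin α) * T s 1 := by
      rw [← hTn s]
      linear_combination T s 0 * hperp s + T s 1 * h
    field_simp
    apply mul_left_cancel₀ hsin.ne'
    linarith
  have hN1' : ∀ s, N s 1 = (δ / Real.sin α) * T s 0 := by
    intro s
    have h := hDs s
    rw [hDc, hδ] at h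
    have : Real.sin α ^ 2 * N s 1 = (δ * Real.sin α) * T s 0 := by
      rw [← hTn s]
      linear_combination T s 1 * hperp s - T s 0 * h
    field_simp
    apply mul_left_cancel₀ hsin.ne'
    linarith
  obtain ⟨ε, hε0, hε1⟩ : ∃ ε : ℝ, T 0 0 = Real.sin α * Real.cos ε ∧
      T 0 1 = Real.sin α * Real.sin ε := by
    have hn : ‖(⟨T 0 0, T 0 1⟩ : ℂ)‖ = Real.sin α := by
      rw [Complex.norm_def, Complex.normSq_mk, ← sq, ← sq, hTn, Real.sqrt_sq hsin.le]
    refine ⟨Complex.arg ⟨T 0 0, T 0 1⟩, ?_, ?_⟩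
    · rw [← hn, Complex.norm_mul_cos_arg]
    · rw [← hn, Complex.norm_mul_sin_arg]
  have hφd : ∀ s, HasDerivAt (fun t => δ * φ t + ε) (δ * ((1 / Real.sin α) * κ s)) s := by
    intro s
    have h1 : HasDerivAt φ ((1 / Real.sin α) * κ s) s := by
      have : φ = fun s => (1 / Real.sin α) * ∫ t in (0:ℝ)..s, κ t := funext hφ
      rw [this]
      exact (intervalIntegral.integral_hasDerivAt_right
        (hκsm.continuous.intervalIntegrable _ _)
        hκsm.continuous.stronglyMeasurable.stronglyMeasurableAtFilter
        hκsm.continuous.continuousAt).const_mul _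
    exact (h1.const_mul δ).add_const ε
  have hφ0 : φ 0 = 0 := by rw [hφ]; simp
  have hu : ∀ s, T s 0 * Real.cos (δ * φ s + ε) + T s 1 * Real.sin (δ * φ s + ε)
      = Real.sin α := by
    intro s
    have hd : ∀ x, HasDerivAt (fun s => T s 0 * Real.cos (δ * φ s + ε)
        + T s 1 * Real.sin (δ * φ s + ε)) 0 x := by
      intro x
      refine (((hTd 0 x).mul (hφd x).cos).add ((hTd 1 x).mul (hφd x).sin)).congr_deriv ?_
      rw [hN0, hN1']
      ring
    have := is_const_of_deriv_eq_zero (fun x => (hd x).differentiableAt)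
      (fun x => (hd x).deriv) s 0
    simp only [hφ0, mul_zero, zero_add] at this
    rw [this, hε0, hε1]
    linear_combination Real.sin α * Real.sin_sq_add_cos_sq ε
  have hv : ∀ s, T s 1 * Real.cos (δ * φ s + ε) - T s 0 * Real.sin (δ * φ s + ε) = 0 := by
    intro s
    have hd : ∀ x, HasDerivAt (fun s => T s 1 * Real.cos (δ * φ s + ε)
        - T s 0 * Real.sin (δ * φ s + ε)) 0 x := by
      intro x
      refine (((hTd 1 x).mul (hφd x).cos).sub ((hTd 0 x).mul (hφd x).sin)).congr_deriv ?_
      rw [hN0, hN1']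
      ring
    have := is_const_of_deriv_eq_zero (fun x => (hd x).differentiableAt)
      (fun x => (hd x).deriv) s 0
    simp only [hφ0, mul_zero, zero_add] at this
    rw [this, hε0, hε1]
    ring
  have hTeq : ∀ t, vec3 (Real.sin α * Real.cos (δ * φ t + ε))
      (Real.sin α * Real.sin (δ * φ t + ε)) (Real.cos α) = T t := by
    intro t
    have hp := Real.sin_sq_add_cos_sq (δ * φ t + ε)
    ext i
    fin_cases i
    · simp [vec3]
      linear_combination -Real.cos (δ * φ t + ε) * hu t + Real.sin (δ * φ t + ε) * hv t
        + T t 0 * hp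
    · simp [vec3]
      linear_combination -Real.sin (δ * φ t + ε) * hu t - Real.cos (δ * φ t + ε) * hv t
        + T t 1 * hp
    · simp [vec3, hT2]
  refine ⟨ε, δ, ?_, ?_⟩
  · rcases sq_eq_sq_iff_eq_or_eq_neg.1 (hδ1.trans (one_pow 2).symm) with h | h
    · exact Or.inr h
    · exact Or.inl h
  · intro s
    simp only [hTeq]
    rw [intervalIntegral.integral_eq_sub_of_hasDerivAt (f := ψ)
      (fun x _ => hψT x ▸ hcd ψ hψ x) (hTsm.continuous.intervalIntegrable _ _)]
    abel
end
end

section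
/- Let κ : ℝ → ℝ be smooth with κ(s) > 0 for all s, let α ∈ (0, π), set θ(s) = ∫₀ˢ κ(t) dt, and define ψ(s) = sin α · ∫₀ˢ ( cos(θ(t)/ sin α), sin(θ(t)/ sin α), cot α ) dt. Then ψ is a unit speed curve (‖ψ'(s)‖ = 1 for all s), its curvature satisfies ‖ψ''(s)‖ = κ(s) for all s, its torsion satisfies ⟨ψ'(s) × ψ''(s), ψ'''(s)⟩ / ‖ψ''(s)‖² = cot(α)·κ(s) for all s (so ψ is a general helix with τ/κ = cot α), and its tangent makes the constant angle α with e₃, i.e. ⟨ψ'(s), e₃⟩ = cos α for all s. -/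
noncomputable section
open Real
open scoped RealInnerProductSpace

lemma vec3_eq (x y z : ℝ) :
    vec3 x y z = x • vec3 1 0 0 + y • vec3 0 1 0 + z • vec3 0 0 1 := by
  ext i
  fin_cases i <;> simp [vec3]

lemma vec3_hasDerivAt {f g h : ℝ → ℝ} {f' g' h' s : ℝ} (hf : HasDerivAt f f' s)
    (hg : HasDerivAt g g' s) (hh : HasDerivAt h h' s) :
    HasDerivAt (fun t => vec3 (f t) (g t) (h t)) (vec3 f' g' h') s := by
  have e : (fun t => vec3 (f t) (g t) (h t)) =
      fun t => f t • vec3 1 0 0 + g t • vec3 0 1 0 + h t • vec3 0 0 1 := by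
    funext t
    exact vec3_eq _ _ _
  rw [e, vec3_eq f' g' h']
  exact ((hf.smul_const _).add (hg.smul_const _)).add (hh.smul_const _)

lemma vec3_norm (x y z : ℝ) : ‖vec3 x y z‖ = √(x ^ 2 + y ^ 2 + z ^ 2) := by
  simp [vec3, EuclideanSpace.norm_eq, Fin.sum_univ_three]

lemma vec3_inner (x y z a b c : ℝ) :
    ⟪vec3 x y z, vec3 a b c⟫ = x * a + y * b + z * c := by
  simp [vec3, PiLp.inner_apply, Fin.sum_univ_three]
  ring

lemma vec3_cross (x y z a b c : ℝ) :
    cross3 (vec3 x y z) (vec3 a b c) =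
      vec3 (y * c - z * b) (z * a - x * c) (x * b - y * a) := by
  simp [vec3, cross3]

lemma e₃_eq : e₃ = vec3 0 0 1 := by
  ext i
  fin_cases i <;> simp [vec3, e₃]

/-- The curve constructed from an arbitrary positive curvature κ and angle α by
the integral formula is a unit speed general helix with curvature κ, torsion
cot α · κ, and axis e₃. -/
theorem helix_construction
    (κ : ℝ → ℝ) (hκsm : ContDiff ℝ (⊤ : ℕ∞) κ) (hκpos : ∀ s, 0 < κ s)
    (α : ℝ) (hα : α ∈ Set.Ioo (0 : ℝ) π)
    (θ : ℝ → ℝ) (hθ : ∀ s, θ s = ∫ t in (0:ℝ)..s, κ t)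
    (ψ : ℝ → E3)
    (hψdef : ∀ s, ψ s = Real.sin α •
      ∫ t in (0:ℝ)..s,
        vec3 (Real.cos (θ t / Real.sin α)) (Real.sin (θ t / Real.sin α)) (Real.cot α)) :
    ∀ s : ℝ,
      ‖deriv ψ s‖ = 1 ∧
      ‖deriv (deriv ψ) s‖ = κ s ∧
      ⟪cross3 (deriv ψ s) (deriv (deriv ψ) s), deriv (deriv (deriv ψ)) s⟫
          / ‖deriv (deriv ψ) s‖ ^ 2 = Real.cot α * κ s ∧
      ⟪deriv ψ s, e₃⟫ = Real.cos α := by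
  have hsin : 0 < Real.sin α := Real.sin_pos_of_pos_of_lt_pi hα.1 hα.2
  have hne := hsin.ne'
  have hθd : ∀ s, HasDerivAt θ (κ s) s := by
    intro s
    have e : θ = fun s => ∫ t in (0:ℝ)..s, κ t := funext hθ
    rw [e]
    exact hκsm.continuous.integral_hasStrictDerivAt 0 s |>.hasDerivAt
  have hφ : ∀ s, HasDerivAt (fun t => θ t / Real.sin α) (κ s / Real.sin α) s :=
    fun s => (hθd s).div_const _
  have hκd : ∀ s, HasDerivAt κ (deriv κ s) s := fun s =>
    (hκsm.differentiable (by simp) s).hasDerivAt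
  have hd1 : deriv ψ = fun s => vec3 (Real.sin α * Real.cos (θ s / Real.sin α))
      (Real.sin α * Real.sin (θ s / Real.sin α)) (Real.cos α) := by
    funext s
    have e : ψ = fun s => Real.sin α •
      ∫ t in (0:ℝ)..s,
        vec3 (Real.cos (θ t / Real.sin α)) (Real.sin (θ t / Real.sin α)) (Real.cot α) :=
      funext hψdef
    have hc : Continuous fun t =>
        vec3 (Real.cos (θ t / Real.sin α)) (Real.sin (θ t / Real.sin α)) (Real.cot α) :=
      continuous_iff_continuousAt.2 fun t =>
        (vec3_hasDerivAt (hφ t).cos (hφ t).sin (hasDerivAt_const t (Real.cot α))).continuousAt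
    have h := ((hc.integral_hasStrictDerivAt 0 s).hasDerivAt.const_smul (Real.sin α)).deriv
    rw [e]
    refine h.trans ?_
    ext i
    fin_cases i <;> simp [vec3, Real.cot_eq_cos_div_sin]
    field_simp
  have hd2 : deriv (deriv ψ) = fun s => vec3 (-(κ s * Real.sin (θ s / Real.sin α)))
      (κ s * Real.cos (θ s / Real.sin α)) 0 := by
    funext s
    rw [hd1]
    refine (vec3_hasDerivAt ((hφ s).cos.const_mul _) ((hφ s).sin.const_mul _)
      (hasDerivAt_const s (Real.cos α))).deriv.trans ?_
    congr 1 <;> field_simp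
  intro s
  have hd3 := (vec3_hasDerivAt ((hκd s).mul (hφ s).sin).neg ((hκd s).mul (hφ s).cos)
      (hasDerivAt_const s (0:ℝ))).deriv
  have hd3' : deriv (deriv (deriv ψ)) s = _ := (congrArg (fun f => deriv f s) hd2).trans hd3
  have hn : ‖deriv (deriv ψ) s‖ = κ s := by
    rw [hd2, vec3_norm, Real.sqrt_eq_iff_mul_self_eq_of_pos (hκpos s)]
    linear_combination -(κ s) ^ 2 * Real.sin_sq_add_cos_sq (θ s / Real.sin α)
  have hk := (hκpos s).ne'
  have hcs := Real.sin_sq_add_cos_sq (θ s / Real.sin α)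
  refine ⟨?_, hn, ?_, ?_⟩
  · rw [hd1, vec3_norm, Real.sqrt_eq_one]
    linear_combination Real.sin α ^ 2 * hcs + Real.sin_sq_add_cos_sq α
  · rw [hn, hd3', hd2, hd1]
    simp only [vec3_cross, vec3_inner]
    rw [Real.cot_eq_cos_div_sin, div_eq_iff (pow_ne_zero 2 hk)]
    generalize Real.sin (θ s / Real.sin α) = S at *
    generalize Real.cos (θ s / Real.sin α) = C at *
    field_simp
    linear_combination κ s ^ 3 * Real.cos α * hcs
  · rw [hd1, e₃_eq, vec3_inner]
    ring
end
end

section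
/- (Fundamental existence theorem for space curves.) Let κ, τ : ℝ → ℝ be smooth functions with κ(s) > 0 for all s. Then there exists a smooth unit speed curve ψ : ℝ → E³ such that for all s ∈ ℝ: ‖ψ'(s)‖ = 1, ‖ψ''(s)‖ = κ(s), and ⟨ψ'(s) × ψ''(s), ψ'''(s)⟩ / ‖ψ''(s)‖² = τ(s). -/
noncomputable section
open Real
open scoped RealInnerProductSpace

section ODE
open Set

variable {E : Type*} [NormedAddCommGroup E] [InnerProductSpace ℝ E]

/-- The truncated identity. -/
def trunc (x : E) : E := (2 / (1 + ‖x‖ ^ 2)) • x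

lemma trunc_norm_le (x : E) : ‖trunc x‖ ≤ 1 := by
  have h : 0 < 1 + ‖x‖ ^ 2 := by positivity
  rw [trunc, norm_smul, Real.norm_of_nonneg (by positivity), div_mul_eq_mul_div, div_le_one h]
  nlinarith [sq_nonneg (‖x‖ - 1)]

lemma trunc_contDiff : ContDiff ℝ 1 (trunc : E → E) := by
  unfold trunc
  refine ContDiff.smul (ContDiff.div contDiff_const (contDiff_const.add (contDiff_norm_sq ℝ)) ?_) contDiff_id
  intro x; positivity

lemma inner_const {T : ℝ} {α β a b : ℝ → E}
    (ha : ∀ t ∈ Ioo (-T) T, HasDerivAt α (a t) t)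
    (hb : ∀ t ∈ Ioo (-T) T, HasDerivAt β (b t) t)
    (h : ∀ t, ⟪α t, b t⟫ + ⟪a t, β t⟫ = 0) {t : ℝ} (ht : t ∈ Ioo (-T) T) :
    ⟪α t, β t⟫ = ⟪α 0, β 0⟫ := by
  have hd : ∀ t ∈ Ioo (-T) T, HasDerivAt (fun s => ⟪α s, β s⟫) 0 t := by
    intro t ht
    have := (ha t ht).inner ℝ (hb t ht)
    rwa [h t] at this
  have h0 : (0:ℝ) ∈ Ioo (-T) T := by
    constructor <;> linarith [ht.1, ht.2]
  exact isOpen_Ioo.is_const_of_deriv_eq_zero isPreconnected_Ioo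
    (fun s hs => (hd s hs).differentiableAt.differentiableWithinAt)
    (fun s hs => (hd s hs).deriv) ht h0

lemma exists_local [FiniteDimensional ℝ E] (A : ℝ → E →L[ℝ] E) (hA : Continuous A)
    (hskew : ∀ t x, ⟪A t x, x⟫ = 0) (x₀ : E) (hx : ‖x₀‖ = 1) (T : ℝ) (hT : 0 < T) :
    ∃ α : ℝ → E, α 0 = x₀ ∧ ∀ t ∈ Ioo (-T) T, HasDerivAt α (A t (α t)) t := by
  have : CompleteSpace E := FiniteDimensional.complete ℝ E
  have : ProperSpace E := FiniteDimensional.proper ℝ E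
  obtain ⟨M, hM⟩ := (isCompact_Icc (a := -T) (b := T)).exists_bound_of_continuousOn hA.continuousOn
  have hM0 : 0 ≤ M := (norm_nonneg _).trans (hM 0 ⟨by linarith, hT.le⟩)
  lift M to NNReal using hM0
  lift T to NNReal using hT.le
  obtain ⟨K, hK⟩ := (trunc_contDiff (E := E)).contDiffOn.exists_lipschitzOnWith (s := Metric.closedBall x₀ (M * T : NNReal))
    one_ne_zero (convex_closedBall _ _) (isCompact_closedBall _ _)
  have hPL : IsPicardLindelof (fun t x => A t (trunc x)) (tmin := -T) (tmax := T)
      ⟨0, by constructor <;> linarith⟩ x₀ (M * T) 0 M (M * K) := by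
    constructor
    · intro t ht
      refine LipschitzOnWith.of_dist_le_mul fun x hx y hy => ?_
      have h1 := hK.dist_le_mul x hx y hy
      rw [dist_eq_norm, ← map_sub]
      refine ((A t).le_opNorm _).trans ?_
      rw [← dist_eq_norm, NNReal.coe_mul, mul_assoc]
      exact mul_le_mul (hM t ht) h1 dist_nonneg M.2
    · intro x hx
      exact (hA.clm_apply continuous_const).continuousOn
    · intro t ht x hx
      refine ((A t).le_opNorm _).trans ?_
      have := mul_le_mul (hM t ht) (trunc_norm_le x) (norm_nonneg _) M.2
      simpa using this
    · simp
  obtain ⟨α, h0, hα⟩ := hPL.exists_eq_forall_mem_Icc_hasDerivWithinAt₀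
  have hα' : ∀ t ∈ Ioo (-(T:ℝ)) T, HasDerivAt α (A t (trunc (α t))) t := fun t ht =>
    (hα t (Ioo_subset_Icc_self ht)).hasDerivAt (Icc_mem_nhds ht.1 ht.2)
  refine ⟨α, h0, fun t ht => ?_⟩
  have hskew' : ∀ t x, ⟪x, A t x⟫ = 0 := fun t x => by rw [real_inner_comm, hskew]
  have hn := inner_const hα' hα' (fun t => by
    simp [trunc, inner_smul_left, inner_smul_right, hskew, hskew' t]) ht
  have h0' : α 0 = x₀ := h0
  rw [real_inner_self_eq_norm_sq, real_inner_self_eq_norm_sq, h0', hx] at hn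
  have := hα' t ht
  rwa [trunc, hn, show (2:ℝ)/(1+1^2) = 1 by norm_num, one_smul] at this

lemma exists_global [FiniteDimensional ℝ E] (A : ℝ → E →L[ℝ] E) (hA : Continuous A)
    (hskew : ∀ t x, ⟪A t x, x⟫ = 0) (x₀ : E) (hx : ‖x₀‖ = 1) :
    ∃ α : ℝ → E, α 0 = x₀ ∧ ∀ t, HasDerivAt α (A t (α t)) t := by
  choose! α h0 hα using exists_local A hA hskew x₀ hx
  have huniq : ∀ S T t : ℝ, |t| < S → |t| < T → α S t = α T t := by
    intro S T t hS hT
    have hm : 0 < min S T := lt_of_le_of_lt (abs_nonneg t) (lt_min hS hT)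
    have hS0 : 0 < S := lt_of_le_of_lt (abs_nonneg t) hS
    have hT0 : 0 < T := lt_of_le_of_lt (abs_nonneg t) hT
    have hd : ∀ t ∈ Ioo (-(min S T)) (min S T),
        HasDerivAt (fun t => α S t - α T t) (A t (α S t - α T t)) t := by
      intro t ht
      rw [map_sub]
      have := min_le_left S T
      have := min_le_right S T
      exact (hα S hS0 t ⟨by linarith [ht.1], by linarith [ht.2]⟩).sub
        (hα T hT0 t ⟨by linarith [ht.1], by linarith [ht.2]⟩)
    have := inner_const hd hd (fun t => by
      rw [real_inner_comm, hskew, add_zero]) (abs_lt.1 (lt_min hS hT))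
    rw [h0 S hS0, h0 T hT0, sub_self, inner_zero_left, inner_self_eq_zero] at this
    exact sub_eq_zero.1 this
  refine ⟨fun t => α (|t| + 1) t, h0 _ (by positivity), fun t => ?_⟩
  have h1 := hα (|t| + 2) (by positivity) t (abs_lt.1 (by linarith))
  have h2 : (fun t => α (|t| + 1) t) =ᶠ[nhds t] α (|t| + 2) := by
    have : ∀ᶠ s in nhds t, |s| < |t| + 2 :=
      continuous_abs.continuousAt.eventually_lt continuousAt_const (by linarith)
    filter_upwards [this] with s hs
    exact huniq _ _ _ (by linarith) hs
  have h3 := h1.congr_of_eventuallyEq h2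
  rwa [huniq (|t| + 2) (|t| + 1) t (by linarith) (by linarith)] at h3

end ODE


def genK : E3 →L[ℝ] E3 := LinearMap.toContinuousLinearMap
  { toFun := fun x => vec3 (x 1) (-x 0) 0
    map_add' := by intro x y; ext i; fin_cases i <;> simp [vec3]; ring
    map_smul' := by intro x y; ext i; fin_cases i <;> simp [vec3] }

def genT : E3 →L[ℝ] E3 := LinearMap.toContinuousLinearMap
  { toFun := fun x => vec3 0 (x 2) (-x 1)
    map_add' := by intro x y; ext i; fin_cases i <;> simp [vec3]; ring
    map_smul' := by intro x y; ext i; fin_cases i <;> simp [vec3] }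

lemma genK_apply (x : E3) : genK x = vec3 (x 1) (-x 0) 0 := rfl
lemma genT_apply (x : E3) : genT x = vec3 0 (x 2) (-x 1) := rfl

lemma inner3 (x y : E3) : ⟪x, y⟫ = x 0 * y 0 + x 1 * y 1 + x 2 * y 2 := by
  simp [PiLp.inner_apply, Fin.sum_univ_three]; ring

lemma smooth_of_deriv {f g : ℝ → E3} (h : ∀ t, HasDerivAt f (g t) t)
    (hg : ContDiff ℝ (⊤ : ℕ∞) g) : ContDiff ℝ (⊤ : ℕ∞) f := by
  rw [contDiff_infty_iff_deriv]
  refine ⟨fun t => (h t).differentiableAt, ?_⟩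
  rwa [show deriv f = g from funext fun t => (h t).deriv]

lemma exists_frenet (κ τ : ℝ → ℝ) (hκ : ContDiff ℝ (⊤ : ℕ∞) κ) (hτ : ContDiff ℝ (⊤ : ℕ∞) τ)
    (x₀ : E3) (hx : ‖x₀‖ = 1) :
    ∃ α : ℝ → E3, α 0 = x₀ ∧ ContDiff ℝ (⊤ : ℕ∞) α ∧
      ∀ t, HasDerivAt α (κ t • genK (α t) + τ t • genT (α t)) t := by
  have hAs : ContDiff ℝ (⊤ : ℕ∞) (fun t => κ t • genK + τ t • genT) :=
    (hκ.smul contDiff_const).add (hτ.smul contDiff_const)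
  obtain ⟨α, h0, hα⟩ := exists_global (fun t => κ t • genK + τ t • genT) hAs.continuous
    (by intro t x; simp [inner3, genK_apply, genT_apply, vec3]; ring) x₀ hx
  refine ⟨α, h0, ?_, fun t => by simpa using hα t⟩
  rw [contDiff_infty]
  intro n
  induction n with
  | zero => exact contDiff_zero.2 (continuous_iff_continuousAt.2 fun t => (hα t).continuousAt)
  | succ n ih =>
    have : ContDiff ℝ ((n : WithTop ℕ∞) + 1) α := by
      rw [contDiff_succ_iff_deriv]
      refine ⟨fun t => (hα t).differentiableAt, by simp, ?_⟩
      rw [show deriv α = _ from funext fun t => (hα t).deriv]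
      exact (contDiff_infty.1 hAs n).clm_apply ih
    exact_mod_cast this

lemma hasDerivAt_coord {α : ℝ → E3} {v : E3} {t : ℝ} (h : HasDerivAt α v t) (i : Fin 3) :
    HasDerivAt (fun s => α s i) (v i) t :=
  (EuclideanSpace.proj (𝕜 := ℝ) i).hasFDerivAt.comp_hasDerivAt t h

lemma hasDerivAt_vec3 {a b c : ℝ → ℝ} {a' b' c' t : ℝ} (ha : HasDerivAt a a' t)
    (hb : HasDerivAt b b' t) (hc : HasDerivAt c c' t) :
    HasDerivAt (fun s => vec3 (a s) (b s) (c s)) (vec3 a' b' c') t := by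
  have e : ∀ x y z : ℝ, vec3 x y z = x • vec3 1 0 0 + y • vec3 0 1 0 + z • vec3 0 0 1 := by
    intro x y z; ext i; fin_cases i <;> simp [vec3]
  simp only [e (a _), e a']
  exact ((ha.smul_const _).add (hb.smul_const _)).add (hc.smul_const _)

lemma contDiff_vec3 {a b c : ℝ → ℝ} (ha : ContDiff ℝ (⊤ : ℕ∞) a)
    (hb : ContDiff ℝ (⊤ : ℕ∞) b) (hc : ContDiff ℝ (⊤ : ℕ∞) c) :
    ContDiff ℝ (⊤ : ℕ∞) (fun s => vec3 (a s) (b s) (c s)) := by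
  rw [contDiff_euclidean]
  intro i; fin_cases i <;> simpa [vec3]

/-- Fundamental existence theorem for space curves: given smooth κ > 0 and τ,
there is a unit speed curve with curvature κ and torsion τ. -/
theorem fundamental_existence_space_curves
    (κ τ : ℝ → ℝ) (hκsm : ContDiff ℝ (⊤ : ℕ∞) κ) (hτsm : ContDiff ℝ (⊤ : ℕ∞) τ)
    (hκpos : ∀ s, 0 < κ s) :
    ∃ ψ : ℝ → E3, ContDiff ℝ (⊤ : ℕ∞) ψ ∧ ∀ s : ℝ,
      ‖deriv ψ s‖ = 1 ∧
      ‖deriv (deriv ψ) s‖ = κ s ∧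
      ⟪cross3 (deriv ψ s) (deriv (deriv ψ) s), deriv (deriv (deriv ψ)) s⟫
          / ‖deriv (deriv ψ) s‖ ^ 2 = τ s := by
  have hex : ∀ i : Fin 3, _ := fun i => exists_frenet κ τ hκsm hτsm
    (EuclideanSpace.single i (1:ℝ)) (by simp)
  choose x h0 hsm hd using hex
  have hc : ∀ i j, ContDiff ℝ (⊤ : ℕ∞) (fun s => x i s j) := fun i j =>
    (contDiff_euclidean.1 (hsm i)) j
  have hp : ∀ i t, HasDerivAt (fun s => x i s 0) (κ t * x i t 1) t := fun i t => by
    simpa [genK_apply, genT_apply, vec3] using hasDerivAt_coord (hd i t) 0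
  have hq : ∀ i t, HasDerivAt (fun s => x i s 1) (-(κ t * x i t 0) + τ t * x i t 2) t :=
    fun i t => by simpa [genK_apply, genT_apply, vec3] using hasDerivAt_coord (hd i t) 1
  have hr : ∀ i t, HasDerivAt (fun s => x i s 2) (-(τ t * x i t 1)) t := fun i t => by
    simpa [genK_apply, genT_apply, vec3] using hasDerivAt_coord (hd i t) 2
  -- orthonormality of the rows
  have hrow : ∀ i j t, ⟪x i t, x j t⟫ = if i = j then (1:ℝ) else 0 := by
    intro i j t
    have := inner_const (T := |t| + 1) (fun t _ => hd i t) (fun t _ => hd j t) (fun t => by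
      simp [inner3, genK_apply, genT_apply, vec3]; ring) (abs_lt.1 (by linarith) : t ∈ Set.Ioo _ _)
    rw [this, h0, h0]
    simp [EuclideanSpace.inner_single_left, eq_comm]
  have hmat : ∀ t, (Matrix.of fun i j => x i t j) * (Matrix.of fun i j => x i t j).transpose = 1 := by
    intro t
    ext i j
    have := hrow i j t
    rw [inner3] at this
    simp only [Matrix.mul_apply, Fin.sum_univ_three, Matrix.transpose_apply, Matrix.of_apply, this, Matrix.one_apply]
  have hcol : ∀ t j k, x 0 t j * x 0 t k + x 1 t j * x 1 t k + x 2 t j * x 2 t k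
      = if j = k then 1 else 0 := by
    intro t j k
    have h1 := mul_eq_one_comm.1 (hmat t)
    have := congrFun (congrFun h1 j) k
    simpa [Matrix.mul_apply, Fin.sum_univ_three, Matrix.one_apply] using this
  have hdet : ∀ t, (x 1 t 0 * x 2 t 1 - x 2 t 0 * x 1 t 1) * x 0 t 2
      + (x 2 t 0 * x 0 t 1 - x 0 t 0 * x 2 t 1) * x 1 t 2
      + (x 0 t 0 * x 1 t 1 - x 1 t 0 * x 0 t 1) * x 2 t 2 = 1 := by
    intro t
    have hD : ∀ t, HasDerivAt (fun t => (x 1 t 0 * x 2 t 1 - x 2 t 0 * x 1 t 1) * x 0 t 2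
      + (x 2 t 0 * x 0 t 1 - x 0 t 0 * x 2 t 1) * x 1 t 2
      + (x 0 t 0 * x 1 t 1 - x 1 t 0 * x 0 t 1) * x 2 t 2) 0 t := by
      intro t
      have := (((((hp 1 t).mul (hq 2 t)).sub ((hp 2 t).mul (hq 1 t))).mul (hr 0 t)).add
        ((((hp 2 t).mul (hq 0 t)).sub ((hp 0 t).mul (hq 2 t))).mul (hr 1 t))).add
        ((((hp 0 t).mul (hq 1 t)).sub ((hp 1 t).mul (hq 0 t))).mul (hr 2 t))
      refine this.congr_deriv ?_
      simp only [Pi.mul_apply, Pi.sub_apply]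
      ring
    have := is_const_of_deriv_eq_zero (fun s => (hD s).differentiableAt) (fun s => (hD s).deriv) t 0
    rw [this]
    simp [h0]
  set T : ℝ → E3 := fun s => vec3 (x 0 s 0) (x 1 s 0) (x 2 s 0) with hTdef
  set N : ℝ → E3 := fun s => vec3 (x 0 s 1) (x 1 s 1) (x 2 s 1) with hNdef
  have hTsm : ContDiff ℝ (⊤ : ℕ∞) T := contDiff_vec3 (hc _ _) (hc _ _) (hc _ _)
  have hψ : ∀ s, HasDerivAt (fun u => ∫ v in (0:ℝ)..u, T v) (T s) s := fun s =>
    intervalIntegral.integral_hasDerivAt_right (hTsm.continuous.intervalIntegrable _ _)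
      (hTsm.continuous.stronglyMeasurableAtFilter _ _) hTsm.continuous.continuousAt
  have hT' : ∀ s, HasDerivAt T (κ s • N s) s := fun s => by
    have := hasDerivAt_vec3 (hp 0 s) (hp 1 s) (hp 2 s)
    refine this.congr_deriv ?_
    ext i; fin_cases i <;> simp [vec3, N]
  have hN' : ∀ s, HasDerivAt N (vec3 (-(κ s * x 0 s 0) + τ s * x 0 s 2)
      (-(κ s * x 1 s 0) + τ s * x 1 s 2) (-(κ s * x 2 s 0) + τ s * x 2 s 2)) s := fun s =>
    hasDerivAt_vec3 (hq 0 s) (hq 1 s) (hq 2 s)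
  have hκd : ∀ s, HasDerivAt κ (deriv κ s) s := fun s =>
    (hκsm.differentiable (by simp) s).hasDerivAt
  have hT'' := fun s => (hκd s).smul (hN' s)
  refine ⟨fun u => ∫ v in (0:ℝ)..u, T v, smooth_of_deriv hψ hTsm, fun s => ?_⟩
  rw [show deriv (fun u => ∫ v in (0:ℝ)..u, T v) = T from funext fun t => (hψ t).deriv,
    show deriv T = κ • N from funext fun t => (hT' t).deriv, (hT'' s).deriv]
  have nT : ‖T s‖ = 1 := by
    have := hcol s 0 0
    rw [← sq_eq_sq₀ (norm_nonneg _) zero_le_one, ← real_inner_self_eq_norm_sq, inner3]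
    simpa [T, vec3] using this
  have nN : ‖N s‖ = 1 := by
    have := hcol s 1 1
    rw [← sq_eq_sq₀ (norm_nonneg _) zero_le_one, ← real_inner_self_eq_norm_sq, inner3]
    simpa [N, vec3] using this
  have nK : ‖(κ • N) s‖ = κ s := by
    rw [Pi.smul_apply', norm_smul, nN, mul_one, Real.norm_of_nonneg (hκpos s).le]
  refine ⟨nT, nK, ?_⟩
  rw [nK, div_eq_iff (pow_ne_zero 2 (hκpos s).ne'), inner3]
  simp [T, N, vec3, cross3]
  linear_combination (τ s * κ s ^ 2) * hdet s
end
end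

section
/- (Fundamental uniqueness theorem for space curves: a curve is defined uniquely, except for position in space, by its curvature and torsion as functions of a natural parameter.) Let ψ₁, ψ₂ : ℝ → E³ be smooth unit speed curves such that for all s ∈ ℝ: ‖ψ₁''(s)‖ = ‖ψ₂''(s)‖ > 0 and ⟨ψ₁'(s) × ψ₁''(s), ψ₁'''(s)⟩ / ‖ψ₁''(s)‖² = ⟨ψ₂'(s) × ψ₂''(s), ψ₂'''(s)⟩ / ‖ψ₂''(s)‖². Then there exist a linear isometry A of E³ with determinant 1 and a vector b ∈ E³ such that ψ₂(s) = A(ψ₁(s)) + b for all s ∈ ℝ. -/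
noncomputable section
open Real
open scoped RealInnerProductSpace

def dt3 (u v : Fin 3 → ℝ) : ℝ := u 0 * v 0 + u 1 * v 1 + u 2 * v 2

def cr3 (u v : Fin 3 → ℝ) : Fin 3 → ℝ :=
  ![u 1 * v 2 - u 2 * v 1, u 2 * v 0 - u 0 * v 2, u 0 * v 1 - u 1 * v 0]

lemma cr3_0 (u v : Fin 3 → ℝ) : cr3 u v 0 = u 1 * v 2 - u 2 * v 1 := rfl
lemma cr3_1 (u v : Fin 3 → ℝ) : cr3 u v 1 = u 2 * v 0 - u 0 * v 2 := rfl
lemma cr3_2 (u v : Fin 3 → ℝ) : cr3 u v 2 = u 0 * v 1 - u 1 * v 0 := rfl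

lemma lagr (T V : Fin 3 → ℝ) (h1 : dt3 T T = 1) (h2 : dt3 T V = 0) :
    dt3 (cr3 T V) (cr3 T V) = dt3 V V := by
  have : dt3 (cr3 T V) (cr3 T V) = dt3 T T * dt3 V V - dt3 T V ^ 2 := by
    simp only [dt3, cr3_0, cr3_1, cr3_2]; ring
  rw [this, h1, h2]; ring

lemma W_formula (T V W : Fin 3 → ℝ) (h1 : dt3 T T = 1) (h2 : dt3 T V = 0)
    (h3 : dt3 T W = - dt3 V V) (i : Fin 3) :
    dt3 V V * W i = - dt3 V V ^ 2 * T i + dt3 V W * V i + dt3 (cr3 T V) W * cr3 T V i := by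
  have key : (dt3 T T * dt3 V V - dt3 T V ^ 2) * W i = dt3 (cr3 T V) W * cr3 T V i
      + (dt3 T W * dt3 V V - dt3 V W * dt3 T V) * T i
      + (dt3 V W * dt3 T T - dt3 T W * dt3 T V) * V i := by
    fin_cases i <;> simp [dt3, cr3_0, cr3_1, cr3_2] <;> ring
  rw [h1, h2, h3] at key
  linear_combination key

lemma C_formula (T V W : Fin 3 → ℝ) (h1 : dt3 T T = 1) (h2 : dt3 T V = 0)
    (h3 : dt3 T W = - dt3 V V) (i : Fin 3) :
    dt3 V V * cr3 T W i = dt3 V W * cr3 T V i - dt3 (cr3 T V) W * V i := by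
  have key : cr3 T (cr3 T V) i = dt3 T V * T i - dt3 T T * V i := by
    fin_cases i <;> simp [dt3, cr3_0, cr3_1, cr3_2] <;> ring
  rw [h1, h2] at key
  have w := W_formula T V W h1 h2 h3
  have w0 := w 0
  have w1 := w 1
  have w2 := w 2
  generalize dt3 V V = p at *
  generalize dt3 V W = q at *
  generalize dt3 (cr3 T V) W = t at *
  fin_cases i <;> simp [cr3_0, cr3_1, cr3_2] at * 
  · linear_combination T 1 * w2 - T 2 * w1 + t * key
  · linear_combination T 2 * w0 - T 0 * w2 + t * key
  · linear_combination T 0 * w1 - T 1 * w0 + t * key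

/-- constancy of one entry -/
lemma entry_deriv (T₁ V₁ W₁ T₂ V₂ W₂ : ℝ → Fin 3 → ℝ)
    (hT₁ : ∀ s i, HasDerivAt (fun s => T₁ s i) (V₁ s i) s)
    (hV₁ : ∀ s i, HasDerivAt (fun s => V₁ s i) (W₁ s i) s)
    (hT₂ : ∀ s i, HasDerivAt (fun s => T₂ s i) (V₂ s i) s)
    (hV₂ : ∀ s i, HasDerivAt (fun s => V₂ s i) (W₂ s i) s)
    (f₁ : ∀ s, dt3 (T₁ s) (T₁ s) = 1) (f₂ : ∀ s, dt3 (T₂ s) (T₂ s) = 1)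
    (g₁ : ∀ s, dt3 (T₁ s) (V₁ s) = 0) (g₂ : ∀ s, dt3 (T₂ s) (V₂ s) = 0)
    (k₁ : ∀ s, dt3 (T₁ s) (W₁ s) = - dt3 (V₁ s) (V₁ s))
    (k₂ : ∀ s, dt3 (T₂ s) (W₂ s) = - dt3 (V₂ s) (V₂ s))
    (p : ∀ s, 0 < dt3 (V₁ s) (V₁ s))
    (pe : ∀ s, dt3 (V₂ s) (V₂ s) = dt3 (V₁ s) (V₁ s))
    (qe : ∀ s, dt3 (V₂ s) (W₂ s) = dt3 (V₁ s) (W₁ s))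
    (te : ∀ s, dt3 (cr3 (T₂ s) (V₂ s)) (W₂ s) = dt3 (cr3 (T₁ s) (V₁ s)) (W₁ s))
    (i j : Fin 3) (s : ℝ) :
    HasDerivAt (fun s => T₂ s i * T₁ s j +
      (V₂ s i * V₁ s j + cr3 (T₂ s) (V₂ s) i * cr3 (T₁ s) (V₁ s) j) / dt3 (V₁ s) (V₁ s)) 0 s := by
  have hC : ∀ (T V W : ℝ → Fin 3 → ℝ) (_ : ∀ s i, HasDerivAt (fun s => T s i) (V s i) s)
    (_ : ∀ s i, HasDerivAt (fun s => V s i) (W s i) s) (i : Fin 3),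
      HasDerivAt (fun s => cr3 (T s) (V s) i) (cr3 (T s) (W s) i) s := by
    intro T V W hT hV i
    fin_cases i
    · simp only [Fin.zero_eta, cr3_0]
      refine HasDerivAt.congr_deriv (((hT s 1).mul (hV s 2)).sub ((hT s 2).mul (hV s 1))) ?_
      ring
    · simp only [Fin.mk_one, cr3_1]
      refine HasDerivAt.congr_deriv (((hT s 2).mul (hV s 0)).sub ((hT s 0).mul (hV s 2))) ?_
      ring
    · simp only [Fin.reduceFinMk, cr3_2]
      refine HasDerivAt.congr_deriv (((hT s 0).mul (hV s 1)).sub ((hT s 1).mul (hV s 0))) ?_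
      ring
  have hp : HasDerivAt (fun s => dt3 (V₁ s) (V₁ s)) (2 * dt3 (V₁ s) (W₁ s)) s := by
    simp only [dt3]
    refine HasDerivAt.congr_deriv ((((hV₁ s 0).mul (hV₁ s 0)).add ((hV₁ s 1).mul (hV₁ s 1))).add
      ((hV₁ s 2).mul (hV₁ s 2))) ?_
    ring
  have hp0 := (p s).ne'
  have := ((hT₂ s i).mul (hT₁ s j)).add ((((hV₂ s i).mul (hV₁ s j)).add
    ((hC T₂ V₂ W₂ hT₂ hV₂ i).mul (hC T₁ V₁ W₁ hT₁ hV₁ j))).div hp hp0)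
  refine this.congr_deriv ?_
  have a1 := W_formula _ _ _ (f₁ s) (g₁ s) (k₁ s) j
  have a2 := W_formula _ _ _ (f₂ s) (g₂ s) (k₂ s) i
  have b1 := C_formula _ _ _ (f₁ s) (g₁ s) (k₁ s) j
  have b2 := C_formula _ _ _ (f₂ s) (g₂ s) (k₂ s) i
  rw [pe, qe, te] at a2 b2
  simp only [Pi.add_apply, Pi.mul_apply]
  generalize dt3 (V₁ s) (V₁ s) = P at *
  generalize dt3 (V₁ s) (W₁ s) = q at *
  generalize dt3 (cr3 (T₁ s) (V₁ s)) (W₁ s) = t at *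
  generalize cr3 (T₁ s) (V₁ s) j = C1 at *
  generalize cr3 (T₂ s) (V₂ s) i = C2 at *
  generalize cr3 (T₁ s) (W₁ s) j = D1 at *
  generalize cr3 (T₂ s) (W₂ s) i = D2 at *
  field_simp
  linear_combination V₂ s i * a1 + V₁ s j * a2 + C2 * b1 + C1 * b2

def fr (T V : Fin 3 → ℝ) : Matrix (Fin 3) (Fin 3) ℝ :=
  !![T 0, T 1, T 2; V 0 / √(dt3 V V), V 1 / √(dt3 V V), V 2 / √(dt3 V V);
    cr3 T V 0 / √(dt3 V V), cr3 T V 1 / √(dt3 V V), cr3 T V 2 / √(dt3 V V)]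

lemma fr_facts (T V : Fin 3 → ℝ) (h1 : dt3 T T = 1) (h2 : dt3 T V = 0) (hp : 0 < dt3 V V) :
    fr T V * (fr T V).transpose = 1 ∧ (fr T V).det = 1 := by
  have hC := lagr T V h1 h2
  have hs := Real.sq_sqrt hp.le
  have hk := Real.sqrt_pos.2 hp
  have c1 : dt3 T (cr3 T V) = 0 := by simp only [dt3, cr3_0, cr3_1, cr3_2]; ring
  have c2 : dt3 V (cr3 T V) = 0 := by simp only [dt3, cr3_0, cr3_1, cr3_2]; ring
  have hd : T 0 * (V 1 * cr3 T V 2 - V 2 * cr3 T V 1) + T 1 * (V 2 * cr3 T V 0 - V 0 * cr3 T V 2)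
    + T 2 * (V 0 * cr3 T V 1 - V 1 * cr3 T V 0) = dt3 V V := by
    rw [← hC]; simp only [dt3, cr3_0, cr3_1, cr3_2]; ring
  have hv : dt3 V V = V 0 * V 0 + V 1 * V 1 + V 2 * V 2 := rfl
  unfold fr
  generalize √(dt3 V V) = k at *
  generalize dt3 V V = P at *
  subst hs
  generalize cr3 T V = C at *
  simp only [dt3] at *
  constructor
  · ext i j
    fin_cases i <;> fin_cases j <;>
      simp [Matrix.mul_apply, Fin.sum_univ_three] <;> field_simp <;> linarith
  · rw [Matrix.det_fin_three]
    simp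
    field_simp
    linarith

lemma coord_deriv (f : ℝ → E3) (hf : Differentiable ℝ f) (s : ℝ) (i : Fin 3) :
    HasDerivAt (fun s => f s i) (deriv f s i) s :=
  (EuclideanSpace.proj i : E3 →L[ℝ] ℝ).hasFDerivAt.comp_hasDerivAt s
    (hf s).hasDerivAt

lemma norm_sq_dt (v : E3) : ‖v‖ ^ 2 = dt3 v v := by
  rw [EuclideanSpace.real_norm_sq_eq, Fin.sum_univ_three, dt3]; ring

lemma dt_deriv (f g f' g' : ℝ → Fin 3 → ℝ) (s : ℝ)
    (hf : ∀ i, HasDerivAt (fun s => f s i) (f' s i) s)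
    (hg : ∀ i, HasDerivAt (fun s => g s i) (g' s i) s) :
    HasDerivAt (fun s => dt3 (f s) (g s)) (dt3 (f' s) (g s) + dt3 (f s) (g' s)) s := by
  simp only [dt3]
  refine HasDerivAt.congr_deriv ((((hf 0).mul (hg 0)).add ((hf 1).mul (hg 1))).add ((hf 2).mul (hg 2))) ?_
  ring

lemma dt_comm (u v : Fin 3 → ℝ) : dt3 u v = dt3 v u := by
  simp only [dt3]; ring

lemma basics (T V W : ℝ → Fin 3 → ℝ)
    (hT : ∀ s i, HasDerivAt (fun s => T s i) (V s i) s)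
    (hV : ∀ s i, HasDerivAt (fun s => V s i) (W s i) s)
    (f : ∀ s, dt3 (T s) (T s) = 1) :
    (∀ s, dt3 (T s) (V s) = 0) ∧ (∀ s, dt3 (T s) (W s) = - dt3 (V s) (V s)) := by
  have h1 : ∀ s, dt3 (T s) (V s) = 0 := by
    intro s
    have h := dt_deriv T T V V s (hT s) (hT s)
    simp only [f] at h
    have := h.unique (hasDerivAt_const s (1:ℝ))
    rw [dt_comm (V s)] at this
    linarith
  refine ⟨h1, fun s => ?_⟩
  have h := dt_deriv T V V W s (hT s) (hV s)
  simp only [h1] at h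
  have := h.unique (hasDerivAt_const s (0:ℝ))
  linarith

lemma inner_dt (u v w : E3) : ⟪cross3 u v, w⟫ = dt3 (cr3 u v) w := by
  simp [cross3, vec3, dt3, cr3, PiLp.inner_apply, Fin.sum_univ_three]
  ring

lemma mat_isom (A : Matrix (Fin 3) (Fin 3) ℝ) (hA : A.transpose * A = 1) (hd : A.det = 1) :
    ∃ L : E3 ≃ₗᵢ[ℝ] E3, LinearMap.det (L.toLinearEquiv : E3 →ₗ[ℝ] E3) = 1 ∧
      ∀ x i, L x i = A i 0 * x 0 + A i 1 * x 1 + A i 2 * x 2 := by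
  have hap : ∀ x i, Matrix.toEuclideanLin A x i = A i 0 * x 0 + A i 1 * x 1 + A i 2 * x 2 := by
    intro x i
    simp [Matrix.toEuclideanLin, Matrix.toLpLin_apply, Matrix.mulVec, dotProduct, Fin.sum_univ_three]
  let L0 : E3 →ₗᵢ[ℝ] E3 := ⟨Matrix.toEuclideanLin A, by
    intro x
    have e : ∀ i j, A 0 i * A 0 j + A 1 i * A 1 j + A 2 i * A 2 j = if i = j then 1 else 0 := by
      intro i j
      have := congrFun (congrFun hA i) j
      simpa [Matrix.mul_apply, Fin.sum_univ_three, Matrix.one_apply] using this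
    have e00 := e 0 0
    have e01 := e 0 1
    have e02 := e 0 2
    have e11 := e 1 1
    have e12 := e 1 2
    have e22 := e 2 2
    simp at e00 e01 e02 e11 e12 e22
    have : ‖Matrix.toEuclideanLin A x‖ ^ 2 = ‖x‖ ^ 2 := by
      rw [norm_sq_dt, norm_sq_dt]
      simp only [dt3, hap]
      linear_combination x 0 ^ 2 * e00 + x 1 ^ 2 * e11 + x 2 ^ 2 * e22 + 2 * x 0 * x 1 * e01
        + 2 * x 0 * x 2 * e02 + 2 * x 1 * x 2 * e12
    exact (sq_eq_sq₀ (norm_nonneg _) (norm_nonneg _)).1 this⟩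
  refine ⟨L0.toLinearIsometryEquiv rfl, ?_, fun x i => hap x i⟩
  have : (((L0.toLinearIsometryEquiv rfl).toLinearEquiv : E3 ≃ₗ[ℝ] E3) : E3 →ₗ[ℝ] E3)
      = Matrix.toEuclideanLin A := by
    ext x; rfl
  rw [this, Matrix.toEuclideanLin_eq_toLin_orthonormal, LinearMap.det_toLin, hd]

/-- Fundamental uniqueness theorem for space curves: two unit speed curves with
the same (positive) curvature and the same torsion differ by a direct rigid
motion of E³. -/
theorem fundamental_uniqueness_space_curves
    (ψ₁ ψ₂ : ℝ → E3)
    (hψ₁ : ContDiff ℝ (⊤ : ℕ∞) ψ₁) (hψ₂ : ContDiff ℝ (⊤ : ℕ∞) ψ₂)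
    (hunit₁ : ∀ s, ‖deriv ψ₁ s‖ = 1) (hunit₂ : ∀ s, ‖deriv ψ₂ s‖ = 1)
    (hκpos : ∀ s, 0 < ‖deriv (deriv ψ₁) s‖)
    (hκeq : ∀ s, ‖deriv (deriv ψ₁) s‖ = ‖deriv (deriv ψ₂) s‖)
    (hτeq : ∀ s,
      ⟪cross3 (deriv ψ₁ s) (deriv (deriv ψ₁) s), deriv (deriv (deriv ψ₁)) s⟫
          / ‖deriv (deriv ψ₁) s‖ ^ 2 =
      ⟪cross3 (deriv ψ₂ s) (deriv (deriv ψ₂) s), deriv (deriv (deriv ψ₂)) s⟫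
          / ‖deriv (deriv ψ₂) s‖ ^ 2) :
    ∃ (A : E3 ≃ₗᵢ[ℝ] E3) (b : E3),
      LinearMap.det (A.toLinearEquiv : E3 →ₗ[ℝ] E3) = 1 ∧
      ∀ s : ℝ, ψ₂ s = A (ψ₁ s) + b := by
  have d₁ : ContDiff ℝ (⊤ : ℕ∞) (deriv ψ₁) := (contDiff_infty_iff_deriv.1 hψ₁).2
  have d₂ : ContDiff ℝ (⊤ : ℕ∞) (deriv ψ₂) := (contDiff_infty_iff_deriv.1 hψ₂).2
  have dd₁ : ContDiff ℝ (⊤ : ℕ∞) (deriv (deriv ψ₁)) := (contDiff_infty_iff_deriv.1 d₁).2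
  have dd₂ : ContDiff ℝ (⊤ : ℕ∞) (deriv (deriv ψ₂)) := (contDiff_infty_iff_deriv.1 d₂).2
  have hP₁ := coord_deriv ψ₁ (contDiff_infty_iff_deriv.1 hψ₁).1
  have hP₂ := coord_deriv ψ₂ (contDiff_infty_iff_deriv.1 hψ₂).1
  have hT₁ := coord_deriv _ (contDiff_infty_iff_deriv.1 d₁).1
  have hT₂ := coord_deriv _ (contDiff_infty_iff_deriv.1 d₂).1
  have hV₁ := coord_deriv _ (contDiff_infty_iff_deriv.1 dd₁).1
  have hV₂ := coord_deriv _ (contDiff_infty_iff_deriv.1 dd₂).1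
  have f₁ : ∀ s, dt3 (deriv ψ₁ s).ofLp (deriv ψ₁ s).ofLp = 1 := fun s => by
    rw [← norm_sq_dt, hunit₁]; norm_num
  have f₂ : ∀ s, dt3 (deriv ψ₂ s).ofLp (deriv ψ₂ s).ofLp = 1 := fun s => by
    rw [← norm_sq_dt, hunit₂]; norm_num
  have p : ∀ s, 0 < dt3 (deriv (deriv ψ₁) s).ofLp (deriv (deriv ψ₁) s).ofLp := fun s => by
    rw [← norm_sq_dt]; exact pow_pos (hκpos s) 2
  have pe : ∀ s, dt3 (deriv (deriv ψ₂) s).ofLp (deriv (deriv ψ₂) s).ofLp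
      = dt3 (deriv (deriv ψ₁) s).ofLp (deriv (deriv ψ₁) s).ofLp := fun s => by
    rw [← norm_sq_dt, ← norm_sq_dt, hκeq]
  have te : ∀ s, dt3 (cr3 (deriv ψ₂ s).ofLp (deriv (deriv ψ₂) s).ofLp) (deriv (deriv (deriv ψ₂)) s).ofLp
      = dt3 (cr3 (deriv ψ₁ s).ofLp (deriv (deriv ψ₁) s).ofLp) (deriv (deriv (deriv ψ₁)) s).ofLp := fun s => by
    have h := hτeq s
    rw [inner_dt, inner_dt, norm_sq_dt, norm_sq_dt, pe] at h
    exact ((div_left_inj' (p s).ne').1 h).symm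
  obtain ⟨T₁, eT₁⟩ : ∃ T : ℝ → Fin 3 → ℝ, T = fun s i => deriv ψ₁ s i := ⟨_, rfl⟩
  obtain ⟨T₂, eT₂⟩ : ∃ T : ℝ → Fin 3 → ℝ, T = fun s i => deriv ψ₂ s i := ⟨_, rfl⟩
  obtain ⟨V₁, eV₁⟩ : ∃ T : ℝ → Fin 3 → ℝ, T = fun s i => deriv (deriv ψ₁) s i := ⟨_, rfl⟩
  obtain ⟨V₂, eV₂⟩ : ∃ T : ℝ → Fin 3 → ℝ, T = fun s i => deriv (deriv ψ₂) s i := ⟨_, rfl⟩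
  obtain ⟨W₁, eW₁⟩ : ∃ T : ℝ → Fin 3 → ℝ, T = fun s i => deriv (deriv (deriv ψ₁)) s i := ⟨_, rfl⟩
  obtain ⟨W₂, eW₂⟩ : ∃ T : ℝ → Fin 3 → ℝ, T = fun s i => deriv (deriv (deriv ψ₂)) s i := ⟨_, rfl⟩
  replace hP₁ : ∀ s i, HasDerivAt (fun s => ψ₁ s i) (T₁ s i) s := by subst eT₁; exact hP₁
  replace hP₂ : ∀ s i, HasDerivAt (fun s => ψ₂ s i) (T₂ s i) s := by subst eT₂; exact hP₂
  replace hT₁ : ∀ s i, HasDerivAt (fun s => T₁ s i) (V₁ s i) s := by subst eT₁ eV₁; exact hT₁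
  replace hT₂ : ∀ s i, HasDerivAt (fun s => T₂ s i) (V₂ s i) s := by subst eT₂ eV₂; exact hT₂
  replace hV₁ : ∀ s i, HasDerivAt (fun s => V₁ s i) (W₁ s i) s := by subst eW₁ eV₁; exact hV₁
  replace hV₂ : ∀ s i, HasDerivAt (fun s => V₂ s i) (W₂ s i) s := by subst eW₂ eV₂; exact hV₂
  replace f₁ : ∀ s, dt3 (T₁ s) (T₁ s) = 1 := by subst eT₁; exact f₁
  replace f₂ : ∀ s, dt3 (T₂ s) (T₂ s) = 1 := by subst eT₂; exact f₂
  replace p : ∀ s, 0 < dt3 (V₁ s) (V₁ s) := by subst eV₁; exact p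
  replace pe : ∀ s, dt3 (V₂ s) (V₂ s) = dt3 (V₁ s) (V₁ s) := by subst eV₁ eV₂; exact pe
  replace te : ∀ s, dt3 (cr3 (T₂ s) (V₂ s)) (W₂ s) = dt3 (cr3 (T₁ s) (V₁ s)) (W₁ s) := by
    subst eT₁ eT₂ eV₁ eV₂ eW₁ eW₂; exact te
  obtain ⟨g₁, k₁⟩ := basics T₁ V₁ W₁ hT₁ hV₁ f₁
  obtain ⟨g₂, k₂⟩ := basics T₂ V₂ W₂ hT₂ hV₂ f₂
  have qe : ∀ s, dt3 (V₂ s) (W₂ s) = dt3 (V₁ s) (W₁ s) := by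
    intro s
    have h1 := dt_deriv V₁ V₁ W₁ W₁ s (hV₁ s) (hV₁ s)
    have h2 := dt_deriv V₂ V₂ W₂ W₂ s (hV₂ s) (hV₂ s)
    simp only [pe] at h2
    have := h1.unique h2
    rw [dt_comm (W₁ s), dt_comm (W₂ s)] at this
    linarith
  have hE := entry_deriv T₁ V₁ W₁ T₂ V₂ W₂ hT₁ hV₁ hT₂ hV₂ f₁ f₂ g₁ g₂ k₁ k₂ p pe qe te
  let A : Matrix (Fin 3) (Fin 3) ℝ := (fr (T₂ 0) (V₂ 0)).transpose * fr (T₁ 0) (V₁ 0)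
  have hAe : ∀ i j s, A i j = T₂ s i * T₁ s j +
      (V₂ s i * V₁ s j + cr3 (T₂ s) (V₂ s) i * cr3 (T₁ s) (V₁ s) j) / dt3 (V₁ s) (V₁ s) := by
    intro i j s
    have hc := is_const_of_deriv_eq_zero (fun s => (hE i j s).differentiableAt)
      (fun s => (hE i j s).deriv) s 0
    refine Eq.trans ?_ hc.symm
    have hs := Real.sq_sqrt (p 0).le
    have hk := Real.sqrt_pos.2 (p 0)
    simp only [A, Matrix.mul_apply, Fin.sum_univ_three, Matrix.transpose_apply, fr, pe]
    generalize √(dt3 (V₁ 0) (V₁ 0)) = k at *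
    rw [← hs]
    fin_cases i <;> fin_cases j <;> simp <;> field_simp <;> ring
  obtain ⟨o₁, e₁⟩ := fr_facts _ _ (f₁ 0) (g₁ 0) (p 0)
  obtain ⟨o₂, e₂⟩ := fr_facts _ _ (f₂ 0) (g₂ 0) (by rw [pe]; exact p 0)
  obtain ⟨L, hdet, hL⟩ := mat_isom A (by
    simp only [A, Matrix.transpose_mul, Matrix.transpose_transpose]
    rw [Matrix.mul_assoc, ← Matrix.mul_assoc (fr (T₂ 0) (V₂ 0)), o₂, Matrix.one_mul]
    exact mul_eq_one_comm.1 o₁) (by simp [A, e₁, e₂])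
  refine ⟨L, ψ₂ 0 - L (ψ₁ 0), hdet, fun s => ?_⟩
  have hd : ∀ i s, HasDerivAt (fun s => ψ₂ s i - L (ψ₁ s) i) 0 s := by
    intro i s
    simp only [hL]
    refine ((hP₂ s i).sub ((((hP₁ s 0).const_mul (A i 0)).add ((hP₁ s 1).const_mul (A i 1))).add
      ((hP₁ s 2).const_mul (A i 2)))).congr_deriv ?_
    rw [hAe i 0 s, hAe i 1 s, hAe i 2 s]
    have x1 := f₁ s
    have x2 := g₁ s
    have x3 : dt3 (T₁ s) (cr3 (T₁ s) (V₁ s)) = 0 := by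
      simp only [dt3, cr3_0, cr3_1, cr3_2]; ring
    have hp := p s
    generalize dt3 (V₁ s) (V₁ s) = P at *
    generalize cr3 (T₁ s) (V₁ s) = C1 at *
    generalize cr3 (T₂ s) (V₂ s) = C2 at *
    simp only [dt3] at x1 x2 x3
    field_simp
    linear_combination -P * T₂ s i * x1 - V₂ s i * x2 - C2 i * x3
  ext i
  have hc := is_const_of_deriv_eq_zero (fun s => (hd i s).differentiableAt)
      (fun s => (hd i s).deriv) s 0
  simp only [PiLp.add_apply, PiLp.sub_apply] at hc ⊢
  linarith
end
end

section
/- (Plane curve case, τ = 0.) Let ψ : ℝ → E³ be a unit speed curve with Frenet apparatus (T, N, B, κ, τ) such that κ(s) > 0, τ(s) = 0, and B(s) = e₃ for all s, and with N(s) = B(s) × T(s) for all s. Set θ(s) = ∫₀ˢ κ(t) dt. Then there exists ε ∈ ℝ such that ψ(s) = ψ(0) + ∫₀ˢ ( cos(θ(t) + ε), sin(θ(t) + ε), 0 ) dt for all s ∈ ℝ. -/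
noncomputable section
open Real
open scoped RealInnerProductSpace

/-- Example 1: a plane curve (τ = 0, binormal e₃) has the classical natural
parameterization. -/
theorem plane_curve_position_vector
    (ψ T N B : ℝ → E3) (κ τ : ℝ → ℝ)
    (hψ : ContDiff ℝ (⊤ : ℕ∞) ψ) (hTsm : ContDiff ℝ (⊤ : ℕ∞) T)
    (hNsm : ContDiff ℝ (⊤ : ℕ∞) N) (hBsm : ContDiff ℝ (⊤ : ℕ∞) B)
    (hκsm : ContDiff ℝ (⊤ : ℕ∞) κ) (hτsm : ContDiff ℝ (⊤ : ℕ∞) τ)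
    (hT1 : ∀ s, ‖T s‖ = 1) (hN1 : ∀ s, ‖N s‖ = 1) (hB1 : ∀ s, ‖B s‖ = 1)
    (hTN : ∀ s, ⟪T s, N s⟫ = 0) (hTB : ∀ s, ⟪T s, B s⟫ = 0) (hNB : ∀ s, ⟪N s, B s⟫ = 0)
    (hψT : ∀ s, deriv ψ s = T s)
    (hT' : ∀ s, deriv T s = κ s • N s)
    (hN' : ∀ s, deriv N s = (-(κ s)) • T s + τ s • B s)
    (hB' : ∀ s, deriv B s = (-(τ s)) • N s)
    (hκpos : ∀ s, 0 < κ s) (hτ0 : ∀ s, τ s = 0)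
    (hBe₃ : ∀ s, B s = e₃) (hNBT : ∀ s, N s = cross3 (B s) (T s))
    (θ : ℝ → ℝ) (hθ : ∀ s, θ s = ∫ t in (0:ℝ)..s, κ t) :
    ∃ ε : ℝ, ∀ s : ℝ,
      ψ s = ψ 0 + ∫ t in (0:ℝ)..s,
        vec3 (Real.cos (θ t + ε)) (Real.sin (θ t + ε)) 0 := by
  have hκc : Continuous κ := hκsm.continuous
  have hθ' : ∀ s, HasDerivAt θ (κ s) s := by
    intro s
    have h := intervalIntegral.integral_hasDerivAt_right (hκc.intervalIntegrable 0 s)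
      hκc.stronglyMeasurable.stronglyMeasurableAtFilter hκc.continuousAt
    have e : θ = fun u => ∫ t in (0:ℝ)..u, κ t := funext hθ
    rw [e]; exact h
  have hθ0 : θ 0 = 0 := by rw [hθ]; simp
  have hTd : ∀ s, HasDerivAt T (κ s • N s) s := by
    intro s
    rw [← hT' s]
    exact (hTsm.differentiable (by simp) s).hasDerivAt
  have hTi : ∀ (i : Fin 3) s, HasDerivAt (fun u => T u i) (κ s * N s i) s := by
    intro i s
    have h := ((EuclideanSpace.proj i : E3 →L[ℝ] ℝ).hasFDerivAt
      (x := T s)).comp_hasDerivAt s (hTd s)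
    simp at h
    exact h
  have h0 : ∀ s, HasDerivAt (fun u => T u 0) (-(κ s * T s 1)) s := by
    intro s
    have h := hTi 0 s
    rw [hNBT, hBe₃] at h
    simpa [cross3, vec3, e₃] using h
  have h1 : ∀ s, HasDerivAt (fun u => T u 1) (κ s * T s 0) s := by
    intro s
    have h := hTi 1 s
    rw [hNBT, hBe₃] at h
    simpa [cross3, vec3, e₃] using h
  have h2 : ∀ s, T s 2 = 0 := by
    intro s
    have h := hTB s
    rw [hBe₃] at h
    simpa [e₃, EuclideanSpace.inner_single_right] using h
  have ha : ∀ s, T s 0 * Real.cos (θ s) + T s 1 * Real.sin (θ s) = T 0 0 := by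
    intro s
    have hd : ∀ s, HasDerivAt
        (fun u => T u 0 * Real.cos (θ u) + T u 1 * Real.sin (θ u)) 0 s := by
      intro s
      refine (((h0 s).mul (hθ' s).cos).add ((h1 s).mul (hθ' s).sin)).congr_deriv ?_
      ring
    have := is_const_of_deriv_eq_zero (fun s => (hd s).differentiableAt)
      (fun s => (hd s).deriv) s 0
    simpa [hθ0] using this
  have hb : ∀ s, T s 1 * Real.cos (θ s) - T s 0 * Real.sin (θ s) = T 0 1 := by
    intro s
    have hd : ∀ s, HasDerivAt
        (fun u => T u 1 * Real.cos (θ u) - T u 0 * Real.sin (θ u)) 0 s := by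
      intro s
      refine (((h1 s).mul (hθ' s).cos).sub ((h0 s).mul (hθ' s).sin)).congr_deriv ?_
      ring
    have := is_const_of_deriv_eq_zero (fun s => (hd s).differentiableAt)
      (fun s => (hd s).deriv) s 0
    simpa [hθ0] using this
  have hn : T 0 0 ^ 2 + T 0 1 ^ 2 = 1 := by
    have h := EuclideanSpace.norm_sq_eq (T 0)
    rw [hT1] at h
    simp [Fin.sum_univ_three, h2] at h
    linarith
  obtain ⟨ε, hc, hs⟩ : ∃ ε : ℝ, Real.cos ε = T 0 0 ∧ Real.sin ε = T 0 1 := by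
    have hz : ‖(⟨T 0 0, T 0 1⟩ : ℂ)‖ = 1 := by
      rw [Complex.norm_def, Complex.normSq_mk, ← pow_two, ← pow_two, hn, Real.sqrt_one]
    refine ⟨Complex.arg ⟨T 0 0, T 0 1⟩, ?_, ?_⟩
    · rw [Complex.cos_arg (by intro h; rw [h] at hz; simp at hz), hz]; simp
    · rw [Complex.sin_arg, hz]; simp
  refine ⟨ε, fun s => ?_⟩
  have hT : ∀ t, vec3 (Real.cos (θ t + ε)) (Real.sin (θ t + ε)) 0 = T t := by
    intro t
    have hcs := Real.sin_sq_add_cos_sq (θ t)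
    ext i
    fin_cases i
    · simp only [vec3, Real.cos_add, hc, hs, ← ha t, ← hb t]
      simp
      linear_combination (T t 0) * hcs
    · simp only [vec3, Real.sin_add, hc, hs, ← ha t, ← hb t]
      simp
      linear_combination (T t 1) * hcs
    · simp [vec3, h2]
  simp_rw [hT]
  rw [intervalIntegral.integral_eq_sub_of_hasDerivAt (f := ψ)]
  · simp
  · intro x _
    rw [← hψT x]
    exact (hψ.differentiable (by simp) x).hasDerivAt
  · exact hTsm.continuous.intervalIntegrable _ _
end
end

section
/- Let a > 0 and α ∈ (0, π/2), and define ψ : ℝ → E³ by ψ(θ) = a·sin α · ( θ, cosh θ, cot(α)·sinh θ ). Then for all θ ∈ ℝ: the speed is ‖ψ'(θ)‖ = a·cosh θ; the curvature is ‖ψ'(θ) × ψ''(θ)‖ / ‖ψ'(θ)‖³ = sin α/(a·cosh² θ); and the torsion is ⟨ψ'(θ) × ψ''(θ), ψ'''(θ)⟩ / ‖ψ'(θ) × ψ''(θ)‖² = cos α/(a·cosh² θ). In particular, the ratio of torsion to curvature is the constant cot α (ψ is a general helix), and writing s(θ) = a·sinh θ for the arc length (so that s'(θ) = ‖ψ'(θ)‖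 and s(0) = 0), the curvature equals a·sin α/(a² + s(θ)²) and the torsion equals a·cos α/(a² + s(θ)²). -/
noncomputable section
open Real
open scoped RealInnerProductSpace

theorem hasDerivAt_vec3_s14 {f g h : ℝ → ℝ} {f' g' h' θ : ℝ} (hf : HasDerivAt f f' θ)
    (hg : HasDerivAt g g' θ) (hh : HasDerivAt h h' θ) :
    HasDerivAt (fun t => vec3 (f t) (g t) (h t)) (vec3 f' g' h') θ := by
  have key : HasDerivAt (fun t => (![f t, g t, h t] : Fin 3 → ℝ)) ![f', g', h'] θ := by
    rw [hasDerivAt_pi]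
    intro i
    fin_cases i
    · simpa using hf
    · simpa using hg
    · simpa using hh
  exact ((PiLp.continuousLinearEquiv 2 ℝ (fun _ : Fin 3 => ℝ)).symm.toContinuousLinearMap.hasFDerivAt.comp_hasDerivAt θ key)

theorem norm_vec3_eq {x y z r : ℝ} (hr : 0 ≤ r) (h : x ^ 2 + y ^ 2 + z ^ 2 = r ^ 2) :
    ‖vec3 x y z‖ = r := by
  rw [EuclideanSpace.norm_eq, vec3]
  simp [Fin.sum_univ_three, h, Real.sqrt_sq hr]

theorem inner_vec3 (x y z u v w : ℝ) : ⟪vec3 x y z, vec3 u v w⟫ = x * u + y * v + z * w := by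
  simp [vec3, PiLp.inner_apply, Fin.sum_univ_three]
  ring

theorem cross3_vec3 (x y z u v w : ℝ) : cross3 (vec3 x y z) (vec3 u v w)
    = vec3 (y * w - z * v) (z * u - x * w) (x * v - y * u) := by
  simp [cross3, vec3]

/-- Example 4: the general helix with curvature a sin α/(a² + s²) and torsion
a cos α/(a² + s²), parameterized with arc length s = a sinh θ. -/
theorem helix_example_four
    (a α : ℝ) (ha : 0 < a) (hα : α ∈ Set.Ioo (0 : ℝ) (π / 2))
    (ψ : ℝ → E3)
    (hψdef : ∀ θ, ψ θ = (a * Real.sin α) •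
      vec3 θ (Real.cosh θ) (Real.cot α * Real.sinh θ)) :
    ∀ θ : ℝ,
      ‖deriv ψ θ‖ = a * Real.cosh θ ∧
      ‖cross3 (deriv ψ θ) (deriv (deriv ψ) θ)‖ / ‖deriv ψ θ‖ ^ 3
          = Real.sin α / (a * Real.cosh θ ^ 2) ∧
      ⟪cross3 (deriv ψ θ) (deriv (deriv ψ) θ), deriv (deriv (deriv ψ)) θ⟫
          / ‖cross3 (deriv ψ θ) (deriv (deriv ψ) θ)‖ ^ 2
          = Real.cos α / (a * Real.cosh θ ^ 2) ∧
      (⟪cross3 (deriv ψ θ) (deriv (deriv ψ) θ), deriv (deriv (deriv ψ)) θ⟫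
          / ‖cross3 (deriv ψ θ) (deriv (deriv ψ) θ)‖ ^ 2)
        / (‖cross3 (deriv ψ θ) (deriv (deriv ψ) θ)‖ / ‖deriv ψ θ‖ ^ 3)
          = Real.cot α ∧
      ‖cross3 (deriv ψ θ) (deriv (deriv ψ) θ)‖ / ‖deriv ψ θ‖ ^ 3
          = a * Real.sin α / (a ^ 2 + (a * Real.sinh θ) ^ 2) ∧
      ⟪cross3 (deriv ψ θ) (deriv (deriv ψ) θ), deriv (deriv (deriv ψ)) θ⟫
          / ‖cross3 (deriv ψ θ) (deriv (deriv ψ) θ)‖ ^ 2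
          = a * Real.cos α / (a ^ 2 + (a * Real.sinh θ) ^ 2) := by
  have hS : 0 < Real.sin α := Real.sin_pos_of_pos_of_lt_pi hα.1 (by linarith [hα.2, Real.pi_pos])
  have hcot : Real.cot α = Real.cos α / Real.sin α := Real.cot_eq_cos_div_sin α
  have hSC := Real.sin_sq_add_cos_sq α
  rw [hcot]
  simp only [hcot] at hψdef
  clear hcot
  generalize Real.sin α = S at *
  generalize Real.cos α = C at *
  have h0 : ψ = fun θ => vec3 (a * S * θ) (a * S * Real.cosh θ) (a * C * Real.sinh θ) := by
    funext θ
    rw [hψdef]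
    ext i
    fin_cases i <;> simp [vec3]
    field_simp
  have h1 : deriv ψ = fun θ => vec3 (a * S) (a * S * Real.sinh θ) (a * C * Real.cosh θ) := by
    funext θ
    rw [h0]
    refine (hasDerivAt_vec3_s14 ?_ ((Real.hasDerivAt_cosh θ).const_mul _)
      ((Real.hasDerivAt_sinh θ).const_mul _)).deriv
    simpa using (hasDerivAt_id θ).const_mul (a * S)
  have h2 : deriv (deriv ψ) = fun θ => vec3 0 (a * S * Real.cosh θ) (a * C * Real.sinh θ) := by
    funext θ
    rw [h1]
    exact (hasDerivAt_vec3_s14 (hasDerivAt_const _ _) ((Real.hasDerivAt_sinh θ).const_mul _)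
      ((Real.hasDerivAt_cosh θ).const_mul _)).deriv
  have h3 : deriv (deriv (deriv ψ)) =
      fun θ => vec3 0 (a * S * Real.sinh θ) (a * C * Real.cosh θ) := by
    funext θ
    rw [h2]
    exact (hasDerivAt_vec3_s14 (hasDerivAt_const _ _) ((Real.hasDerivAt_cosh θ).const_mul _)
      ((Real.hasDerivAt_sinh θ).const_mul _)).deriv
  intro θ
  rw [h3, h2, h1]
  have hc : 0 < Real.cosh θ := Real.cosh_pos θ
  have hcs := Real.cosh_sq θ
  simp only [cross3_vec3, inner_vec3]
  generalize Real.cosh θ = c at *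
  generalize Real.sinh θ = s at *
  have hn1 : ‖vec3 (a * S) (a * S * s) (a * C * c)‖ = a * c := by
    apply norm_vec3_eq (by positivity)
    linear_combination (a ^ 2 * c ^ 2) * hSC - (a ^ 2 * S ^ 2) * hcs
  have hn2 : ‖vec3 (a * S * s * (a * C * s) - a * C * c * (a * S * c))
      (a * C * c * 0 - a * S * (a * C * s)) (a * S * (a * S * c) - a * S * s * 0)‖
      = a ^ 2 * S * c := by
    apply norm_vec3_eq (by positivity)
    have e1 : a * S * s * (a * C * s) - a * C * c * (a * S * c) = - (a ^ 2 * S * C) := by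
      linear_combination (-(a ^ 2 * S * C)) * hcs
    rw [e1]
    linear_combination (a ^ 4 * S ^ 2 * c ^ 2) * hSC - (a ^ 4 * S ^ 2 * C ^ 2) * hcs
  have hin : (a * S * s * (a * C * s) - a * C * c * (a * S * c)) * 0 +
      (a * C * c * 0 - a * S * (a * C * s)) * (a * S * s) +
      (a * S * (a * S * c) - a * S * s * 0) * (a * C * c) = a ^ 3 * S ^ 2 * C := by
    linear_combination (a ^ 3 * S ^ 2 * C) * hcs
  have hden : a ^ 2 + (a * s) ^ 2 = a ^ 2 * c ^ 2 := by
    linear_combination (-a ^ 2) * hcs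
  rw [hn2, hn1, hin, hden]
  refine ⟨rfl, ?_, ?_, ?_, ?_, ?_⟩ <;> field_simp
end
end
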